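/- arXiv:2503.19057 — 4 statements merged into one kernel-verified Lean document; each statement's English description precedes it below -/
import Mathlib

section
/- Let d ≥ 1, p ≥ 1, and let 1 ≤ k ≤ d be an integer. Assume α, β ∈ ℝ satisfy α, β, α+β ∈ (−k, 0). Then for every u ∈ C_c^1(ℝ^d) the weighted Gagliardo-type double integral corresponding to s = 0 is finite: ∫_{ℝ^d} ∫_{ℝ^d} |u(x)−u(y)|^p |x−y|^{−d} |x_k|^α |y_k|^β dx dy < ∞. -/
/-!
The kernel splits into a near and a far part. Near the support of `u`, the Lipschitz bound
and `p ≥ 1` give `|u x - u y|^p |x - y|^{-d} ≲ |x - y|^{1/2 - d}`, a locally integrable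
convolution kernel. When one point lies in the support and the other is far away, boundedness of
`u` gives decay `(1 + |x|)^{-d} (1 + |y|)^{-d}`. Both cases are contained in one pointwise bound,
`exists_kernel_le`.

The near part carries the weight `|x_k|^α |y_k|^β`, which is at most
`|x_k|^{α+β} + |y_k|^{α+β}` because both exponents are negative (`rpow_mul_rpow_le`); it is then
integrated by translation invariance and Tonelli. The far part is a product of functions of
`x` and of `y`. Everything thus reduces to the integrability of `|x_k|^γ (1 + |x|)^{-d}` for
`-k < γ < 0` (`integrable_decayWeight`), used with `γ = α, β, α + β`, and with `k = d`,
`γ = 1/2 - d` for the convolution kernel. The negative power `γ` makes the weight bounded by a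
product of integrable functions of the single coordinates, so no polar coordinates are needed.
-/

open MeasureTheory Real Set Filter Topology

noncomputable section

/-- `|x_k|`: the Euclidean norm of the vector of the first `k` coordinates of `x ∈ ℝ^d`. -/
def pnorm (d k : ℕ) (x : EuclideanSpace ℝ (Fin d)) : ℝ :=
  Real.sqrt (∑ i : Fin d, if (i : ℕ) < k then x i ^ 2 else 0)

/-! ### The partial norm and the model weight -/

lemma pnorm_nonneg (d k : ℕ) (x : EuclideanSpace ℝ (Fin d)) : 0 ≤ pnorm d k x :=
  Real.sqrt_nonneg _

lemma pnorm_self (d : ℕ) (x : EuclideanSpace ℝ (Fin d)) : pnorm d d x = ‖x‖ := by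
  simp [pnorm, EuclideanSpace.norm_eq]

lemma measurable_pnorm (d k : ℕ) : Measurable (pnorm d k) := by
  unfold pnorm
  refine Measurable.sqrt (Finset.measurable_sum _ fun i _ => ?_)
  split_ifs <;> fun_prop

lemma abs_coord_le_pnorm {d k : ℕ} (x : EuclideanSpace ℝ (Fin d)) {i : Fin d} (hi : (i : ℕ) < k) :
    |x i| ≤ pnorm d k x := by
  refine Real.abs_le_sqrt ?_
  have := Finset.single_le_sum (f := fun j : Fin d => if (j : ℕ) < k then x j ^ 2 else 0)
    (fun j _ => by dsimp only; split_ifs <;> positivity) (Finset.mem_univ i)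
  simpa [hi] using this

/-- The model weight `|x_k|^γ (1 + |x|)^{-d}`, in terms of which all integrals are controlled. -/
def decayWeight (d k : ℕ) (γ : ℝ) (x : EuclideanSpace ℝ (Fin d)) : ℝ :=
  pnorm d k x ^ γ * (1 + ‖x‖) ^ (-(d : ℝ))

lemma decayWeight_nonneg (d k : ℕ) (γ : ℝ) (x : EuclideanSpace ℝ (Fin d)) :
    0 ≤ decayWeight d k γ x :=
  mul_nonneg (rpow_nonneg (pnorm_nonneg _ _ _) _) (rpow_nonneg (by positivity) _)

lemma measurable_decayWeight (d k : ℕ) (γ : ℝ) : Measurable (decayWeight d k γ) :=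
  ((measurable_pnorm d k).pow_const γ).mul (by fun_prop)

/-! ### Integrability of the model weight -/

/-- The exponent `a > -1` gives integrability at the origin and `a + e < -1` at infinity. -/
lemma integrable_abs_rpow_mul {a e : ℝ} (ha : -1 < a) (he : e ≤ 0) (hae : a + e < -1) :
    Integrable (fun t : ℝ => |t| ^ a * (1 + |t|) ^ e) := by
  have hmeas : Measurable (fun t : ℝ => |t| ^ a * (1 + |t|) ^ e) := by fun_prop
  have h0 : IntegrableOn (fun t : ℝ => |t| ^ a * (1 + |t|) ^ e) (Ioi 0) := by
    rw [← Ioc_union_Ioi_eq_Ioi zero_le_one]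
    refine IntegrableOn.union ?_ ?_
    · have h := (intervalIntegral.intervalIntegrable_rpow' (a := 0) (b := 1) ha)
      rw [intervalIntegrable_iff_integrableOn_Ioc_of_le zero_le_one] at h
      refine Integrable.mono' h hmeas.aestronglyMeasurable ?_
      refine (ae_restrict_iff' measurableSet_Ioc).2 (Eventually.of_forall fun t ht => ?_)
      rw [Real.norm_of_nonneg (by positivity), abs_of_pos ht.1]
      have : (1 + t) ^ e ≤ 1 := rpow_le_one_of_one_le_of_nonpos (by linarith [ht.1]) he
      exact mul_le_of_le_one_right (rpow_nonneg ht.1.le _) this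
    · refine Integrable.mono' (integrableOn_Ioi_rpow_of_lt hae one_pos)
        hmeas.aestronglyMeasurable ?_
      refine (ae_restrict_iff' measurableSet_Ioi).2 (Eventually.of_forall fun t ht => ?_)
      have ht0 : 0 < t := one_pos.trans ht
      rw [Real.norm_of_nonneg (by positivity), abs_of_pos ht0, rpow_add ht0]
      exact mul_le_mul_of_nonneg_left (rpow_le_rpow_of_nonpos ht0 (by linarith) he)
        (rpow_nonneg ht0.le _)
  have h1 : IntegrableOn (fun t : ℝ => |t| ^ a * (1 + |t|) ^ e) (Iic 0) := by
    rw [← Measure.map_neg_eq_self (volume : Measure ℝ)]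
    let m : MeasurableEmbedding fun x : ℝ => -x := (Homeomorph.neg ℝ).measurableEmbedding
    rw [m.integrableOn_map_iff]
    simp_rw [Function.comp_def, abs_neg, neg_preimage, neg_Iic, neg_zero]
    exact Iff.mpr integrableOn_Ici_iff_integrableOn_Ioi h0
  rw [← integrableOn_univ, ← Iic_union_Ioi (a := (0 : ℝ))]
  exact h1.union h0

/-- The weight is dominated almost everywhere by a product of one-variable
functions `|x_i|^{a_i} (1 + |x_i|)^{e_i}`, with `a_i = γ/k` for `i < k`, `a_i = 0` otherwise, and
`a_i + e_i = -1 + γ/d`; each factor is integrable on the line. -/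
lemma integrable_decayWeight {d k : ℕ} {γ : ℝ} (hk : 1 ≤ k) (hkd : k ≤ d)
    (hγ : -(k : ℝ) < γ) (hγ0 : γ < 0) : Integrable (decayWeight d k γ) := by
  have hk0 : (0 : ℝ) < k := by exact_mod_cast hk
  have hd0 : (0 : ℝ) < d := by exact_mod_cast hk.trans hkd
  set a : Fin d → ℝ := fun i => if (i : ℕ) < k then γ / k else 0 with ha
  set e : Fin d → ℝ := fun i => -1 + γ / d - a i with he
  have hγk : -1 < γ / k := by rw [lt_div_iff₀ hk0]; linarith
  have hγk0 : γ / k < 0 := div_neg_of_neg_of_pos hγ0 hk0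
  have hγd0 : γ / d < 0 := div_neg_of_neg_of_pos hγ0 hd0
  have ha1 : ∀ i, -1 < a i := fun i => by simp only [ha]; split_ifs <;> linarith
  have ha0 : ∀ i, a i ≤ 0 := fun i => by simp only [ha]; split_ifs <;> linarith
  have he0 : ∀ i, e i ≤ 0 := fun i => by
    simp only [he]; linarith [ha1 i]
  have hsa : ∑ i, a i = γ := by
    simp only [ha, ← Finset.sum_filter, Finset.sum_const, Fin.card_filter_val_lt,
      min_eq_right hkd, nsmul_eq_mul]
    field_simp
  have hse : ∑ i, e i = -(d : ℝ) := by
    simp only [he, Finset.sum_sub_distrib, hsa, Finset.sum_const, Finset.card_univ,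
      Fintype.card_fin, nsmul_eq_mul]
    field_simp
    ring
  have hprod : Integrable (fun x : Fin d → ℝ => ∏ i, (|x i| ^ a i * (1 + |x i|) ^ e i)) :=
    Integrable.fintype_prod (f := fun i (t : ℝ) => |t| ^ a i * (1 + |t|) ^ e i)
      fun i => integrable_abs_rpow_mul (ha1 i) (he0 i) (by simp only [he]; linarith)
  have hprod' := (PiLp.volume_preserving_ofLp (Fin d)).integrable_comp_of_integrable hprod
  have hae : ∀ᵐ x : EuclideanSpace ℝ (Fin d), ∀ i, x i ≠ 0 := by
    rw [ae_all_iff]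
    intro i
    exact (PiLp.volume_preserving_ofLp (Fin d)).quasiMeasurePreserving.ae
      (Measure.ae_eval_ne (μ := fun _ : Fin d => (volume : Measure ℝ)) i (0 : ℝ))
  refine hprod'.mono' (measurable_decayWeight d k γ).aestronglyMeasurable ?_
  filter_upwards [hae] with x hx
  have hp : 0 < pnorm d k x :=
    (abs_pos.2 (hx ⟨0, hk.trans hkd⟩)).trans_le (abs_coord_le_pnorm x hk)
  rw [Real.norm_of_nonneg (decayWeight_nonneg _ _ _ _), decayWeight, ← hse]
  nth_rewrite 1 [← hsa]
  rw [rpow_sum_of_pos hp, rpow_sum_of_pos (by positivity), ← Finset.prod_mul_distrib]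
  refine Finset.prod_le_prod (fun i _ => mul_nonneg (rpow_nonneg hp.le _)
    (rpow_nonneg (by positivity) _)) fun i _ => ?_
  refine mul_le_mul ?_ ?_ (rpow_nonneg (by positivity) _) (rpow_nonneg (abs_nonneg _) _)
  · by_cases hi : (i : ℕ) < k
    · exact rpow_le_rpow_of_nonpos (abs_pos.2 (hx i)) (abs_coord_le_pnorm x hi) (ha0 i)
    · simp [ha, hi]
  · refine rpow_le_rpow_of_nonpos (by positivity) ?_ (he0 i)
    have := PiLp.norm_apply_le x i
    rw [Real.norm_eq_abs] at this
    linarith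

lemma lintegral_decayWeight_lt_top {d k : ℕ} {γ : ℝ} (hk : 1 ≤ k) (hkd : k ≤ d)
    (hγ : -(k : ℝ) < γ) (hγ0 : γ < 0) :
    ∫⁻ x, ENNReal.ofReal (decayWeight d k γ x) < ⊤ :=
  (integrable_decayWeight hk hkd hγ hγ0).lintegral_lt_top

/-! ### Pointwise bounds for the kernel -/

/-- Symmetrization of the two weights: since both exponents are negative, the mixed product is at
most the product with both bases replaced by the smaller one. When a base vanishes, the left-hand
side is zero by the convention `0 ^ α = 0` for `α ≠ 0`. -/
lemma rpow_mul_rpow_le {a b α β : ℝ} (ha : 0 ≤ a) (hb : 0 ≤ b) (hα : α < 0) (hβ : β < 0) :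
    a ^ α * b ^ β ≤ a ^ (α + β) + b ^ (α + β) := by
  rcases ha.eq_or_lt with rfl | ha
  · rw [zero_rpow hα.ne, zero_mul, zero_rpow (by linarith)]; positivity
  rcases hb.eq_or_lt with rfl | hb
  · rw [zero_rpow hβ.ne, mul_zero, zero_rpow (by linarith)]; positivity
  rw [rpow_add ha, rpow_add hb]
  rcases le_total a b with h | h
  · have := rpow_le_rpow_of_nonpos ha h hβ.le
    have : a ^ α * b ^ β ≤ a ^ α * a ^ β := by gcongr
    have : 0 ≤ b ^ α * b ^ β := by positivity
    linarith
  · have := rpow_le_rpow_of_nonpos hb h hα.le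
    have : a ^ α * b ^ β ≤ b ^ α * b ^ β := by gcongr
    have : 0 ≤ a ^ α * a ^ β := by positivity
    linarith

/-- If `u` is bounded by `M` and supported in the ball of radius `R`, then at a pair `x, y` with
`|x| ≤ R` and `|y| > 2R` the unweighted kernel is controlled by `(1 + |x|)^{-d} (1 + |y|)^{-d}`,
because `|x - y|` is comparable to `1 + |y|`. -/
lemma kernel_far_le {d : ℕ} {p M R : ℝ} {u : EuclideanSpace ℝ (Fin d) → ℝ} (hp : 1 ≤ p)
    (hR : 1 ≤ R) (hM : ∀ x, |u x| ≤ M) (hsupp : ∀ x, R < ‖x‖ → u x = 0)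
    {x y : EuclideanSpace ℝ (Fin d)} (hx : ‖x‖ ≤ R) (hy : 2 * R < ‖y‖) :
    |u x - u y| ^ p * ‖x - y‖ ^ (-(d : ℝ)) ≤
      M ^ p * 4 ^ (d : ℝ) * (1 + R) ^ (d : ℝ)
        * ((1 + ‖x‖) ^ (-(d : ℝ)) * (1 + ‖y‖) ^ (-(d : ℝ))) := by
  have hM0 : 0 ≤ M := (abs_nonneg _).trans (hM 0)
  rw [hsupp y (by linarith), sub_zero]
  have h1 : |u x| ^ p ≤ M ^ p := rpow_le_rpow (abs_nonneg _) (hM x) (by linarith)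
  have h2 : (1 + ‖y‖) / 4 ≤ ‖x - y‖ := by
    have := norm_sub_norm_le y x
    rw [norm_sub_rev] at this
    linarith
  have h3 : ‖x - y‖ ^ (-(d : ℝ)) ≤ 4 ^ (d : ℝ) * (1 + ‖y‖) ^ (-(d : ℝ)) := by
    refine (rpow_le_rpow_of_nonpos (by positivity) h2 (by simp)).trans_eq ?_
    rw [div_rpow (by positivity) (by positivity), rpow_neg (by norm_num : (0 : ℝ) ≤ 4)]
    field_simp
  have h4 : 1 ≤ (1 + R) ^ (d : ℝ) * (1 + ‖x‖) ^ (-(d : ℝ)) := by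
    have : (1 + R) ^ (-(d : ℝ)) ≤ (1 + ‖x‖) ^ (-(d : ℝ)) :=
      rpow_le_rpow_of_nonpos (by positivity) (by linarith) (by simp)
    calc (1 : ℝ) = (1 + R) ^ (d : ℝ) * (1 + R) ^ (-(d : ℝ)) := by
          rw [← rpow_add (by linarith)]; simp
      _ ≤ _ := by gcongr
  calc |u x| ^ p * ‖x - y‖ ^ (-(d : ℝ))
      ≤ M ^ p * (4 ^ (d : ℝ) * (1 + ‖y‖) ^ (-(d : ℝ))) * 1 := by
        rw [mul_one]; gcongr
    _ ≤ M ^ p * (4 ^ (d : ℝ) * (1 + ‖y‖) ^ (-(d : ℝ)))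
          * ((1 + R) ^ (d : ℝ) * (1 + ‖x‖) ^ (-(d : ℝ))) := by gcongr
    _ = _ := by ring

/-- For `|x|, |y| ≤ 2R` the Lipschitz bound turns the kernel into `|x - y|^{p - d}`, which is at
most a constant times `|x - y|^{1/2 - d}`. The exponent `1/2 - d` is chosen to lie in `(-d, 0)`
also when `d = 1`. -/
lemma kernel_near_le {d : ℕ} {p L R : ℝ} {u : EuclideanSpace ℝ (Fin d) → ℝ} (hp : 1 ≤ p)
    (hR : 1 ≤ R) (hL0 : 0 ≤ L) (hL : ∀ x y, |u x - u y| ≤ L * ‖x - y‖)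
    {x y : EuclideanSpace ℝ (Fin d)} (hx : ‖x‖ ≤ 2 * R) (hy : ‖y‖ ≤ 2 * R) :
    |u x - u y| ^ p * ‖x - y‖ ^ (-(d : ℝ)) ≤
      L ^ p * (4 * R) ^ (p - 1 / 2) * ((1 + 4 * R) ^ (d : ℝ)) ^ 3 *
        (decayWeight d d (1 / 2 - d) (x - y)
          * ((1 + ‖x‖) ^ (-(d : ℝ)) * (1 + ‖y‖) ^ (-(d : ℝ)))) := by
  have key : ∀ z : EuclideanSpace ℝ (Fin d), ‖z‖ ≤ 4 * R →
      1 ≤ (1 + 4 * R) ^ (d : ℝ) * (1 + ‖z‖) ^ (-(d : ℝ)) := by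
    intro z hz
    have : (1 + 4 * R) ^ (-(d : ℝ)) ≤ (1 + ‖z‖) ^ (-(d : ℝ)) :=
      rpow_le_rpow_of_nonpos (by positivity) (by linarith) (by simp)
    calc (1 : ℝ) = (1 + 4 * R) ^ (d : ℝ) * (1 + 4 * R) ^ (-(d : ℝ)) := by
          rw [← rpow_add (by linarith)]; simp
      _ ≤ _ := by gcongr
  have hxy : ‖x - y‖ ≤ 4 * R := (norm_sub_le x y).trans (by linarith)
  rcases (norm_nonneg (x - y)).eq_or_lt with h0 | h0
  · have : x = y := sub_eq_zero.1 (norm_eq_zero.1 h0.symm)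
    subst this
    rw [sub_self, abs_zero, zero_rpow (by linarith), zero_mul]
    have := decayWeight_nonneg d d (1 / 2 - d) (x - x)
    rw [sub_self] at this
    rw [sub_self]
    positivity
  have h1 : |u x - u y| ^ p ≤ L ^ p * ‖x - y‖ ^ p := by
    rw [← mul_rpow hL0 h0.le]
    exact rpow_le_rpow (abs_nonneg _) (hL x y) (by linarith)
  have h2 : ‖x - y‖ ^ p * ‖x - y‖ ^ (-(d : ℝ)) ≤
      (4 * R) ^ (p - 1 / 2) * ‖x - y‖ ^ ((1 : ℝ) / 2 - d) := by
    rw [← rpow_add h0, show p + -(d : ℝ) = (p - 1 / 2) + (1 / 2 - d) by ring, rpow_add h0]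
    gcongr
    linarith
  set A := (1 + 4 * R) ^ (d : ℝ)
  set n : EuclideanSpace ℝ (Fin d) → ℝ := fun z => (1 + ‖z‖) ^ (-(d : ℝ)) with hn
  have hn0 : ∀ z, 0 ≤ n z := fun z => rpow_nonneg (by positivity) _
  have hA0 : 0 ≤ A := by positivity
  have h3 : 1 ≤ (A * n (x - y)) * ((A * n x) * (A * n y)) :=
    one_le_mul_of_one_le_of_one_le (key _ hxy)
      (one_le_mul_of_one_le_of_one_le (key _ (by linarith)) (key _ (by linarith)))
  calc |u x - u y| ^ p * ‖x - y‖ ^ (-(d : ℝ))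
      ≤ L ^ p * ‖x - y‖ ^ p * ‖x - y‖ ^ (-(d : ℝ)) := by gcongr
    _ = L ^ p * (‖x - y‖ ^ p * ‖x - y‖ ^ (-(d : ℝ))) := by ring
    _ ≤ L ^ p * ((4 * R) ^ (p - 1 / 2) * ‖x - y‖ ^ ((1 : ℝ) / 2 - d)) * 1 := by
        rw [mul_one]; gcongr
    _ ≤ L ^ p * ((4 * R) ^ (p - 1 / 2) * ‖x - y‖ ^ ((1 : ℝ) / 2 - d))
          * ((A * n (x - y)) * ((A * n x) * (A * n y))) := by gcongr
    _ = _ := by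
        simp only [decayWeight, pnorm_self, hn]; ring

/-- The unweighted kernel is dominated on all of `ℝ^d × ℝ^d` by a locally integrable
convolution kernel plus a constant, times decay in both variables. -/
lemma exists_kernel_le {d : ℕ} {p : ℝ} {u : EuclideanSpace ℝ (Fin d) → ℝ} (hp : 1 ≤ p)
    (hu : ContDiff ℝ 1 u) (husupp : HasCompactSupport u) :
    ∃ C : ℝ, 0 ≤ C ∧ ∀ x y, |u x - u y| ^ p * ‖x - y‖ ^ (-(d : ℝ)) ≤
      C * ((decayWeight d d (1 / 2 - d) (x - y) + 1)
        * ((1 + ‖x‖) ^ (-(d : ℝ)) * (1 + ‖y‖) ^ (-(d : ℝ)))) := by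
  obtain ⟨L, hL⟩ := hu.lipschitzWith_of_hasCompactSupport husupp one_ne_zero
  obtain ⟨M, hM⟩ := husupp.exists_bound_of_continuous hu.continuous
  obtain ⟨R₀, hR₀⟩ := husupp.isCompact.isBounded.exists_norm_le
  set R := max R₀ 1
  have hR : 1 ≤ R := le_max_right _ _
  have hsupp : ∀ x, R < ‖x‖ → u x = 0 := by
    intro x hx
    by_contra h
    exact absurd (hR₀ x (subset_tsupport u h)) (not_le.2 ((le_max_left _ _).trans_lt hx))
  have hM' : ∀ x, |u x| ≤ M := hM
  have hM0 : 0 ≤ M := (abs_nonneg _).trans (hM' 0)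
  have hL' : ∀ x y, |u x - u y| ≤ L * ‖x - y‖ := fun x y => by
    simpa [Real.norm_eq_abs] using hL.norm_sub_le x y
  set C₁ := (L : ℝ) ^ p * (4 * R) ^ (p - 1 / 2) * ((1 + 4 * R) ^ (d : ℝ)) ^ 3
  set C₂ := M ^ p * 4 ^ (d : ℝ) * (1 + R) ^ (d : ℝ)
  have hC₁ : 0 ≤ C₁ := by positivity
  have hC₂ : 0 ≤ C₂ := by positivity
  refine ⟨C₁ + C₂, by positivity, fun x y => ?_⟩
  have hH := decayWeight_nonneg d d (1 / 2 - d) (x - y)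
  set H := decayWeight d d (1 / 2 - d) (x - y)
  set N := (1 + ‖x‖) ^ (-(d : ℝ)) * (1 + ‖y‖) ^ (-(d : ℝ)) with hN
  have hN0 : 0 ≤ N := by positivity
  have hmono₁ : C₁ * (H * N) ≤ (C₁ + C₂) * ((H + 1) * N) := by gcongr <;> linarith
  have hmono₂ : C₂ * N ≤ (C₁ + C₂) * ((H + 1) * N) := by
    have : N ≤ (H + 1) * N := le_mul_of_one_le_left hN0 (by linarith)
    gcongr
    linarith
  by_cases hx : ‖x‖ ≤ 2 * R <;> by_cases hy : ‖y‖ ≤ 2 * R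
  · exact (kernel_near_le hp hR L.2 hL' hx hy).trans hmono₁
  · by_cases hx' : ‖x‖ ≤ R
    · exact (kernel_far_le hp hR hM' hsupp hx' (not_le.1 hy)).trans hmono₂
    · rw [hsupp x (not_le.1 hx'), hsupp y (by linarith), sub_self, abs_zero,
        zero_rpow (by linarith), zero_mul]
      positivity
  · by_cases hy' : ‖y‖ ≤ R
    · rw [abs_sub_comm, norm_sub_rev]
      refine (kernel_far_le hp hR hM' hsupp hy' (not_le.1 hx)).trans (le_trans ?_ hmono₂)
      rw [hN, mul_comm ((1 + ‖y‖) ^ (-(d : ℝ)))]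
    · rw [hsupp y (not_le.1 hy'), hsupp x (by linarith), sub_self, abs_zero,
        zero_rpow (by linarith), zero_mul]
      positivity
  · rw [hsupp x (by linarith), hsupp y (by linarith), sub_self, abs_zero,
        zero_rpow (by linarith), zero_mul]
    positivity

/-- Inserting the two weights into the kernel bound separates it into terms whose double
integrals factor after a translation. -/
lemma weighted_kernel_le {d k : ℕ} {α β C K h : ℝ} (hα : α < 0) (hβ : β < 0) (hC0 : 0 ≤ C)
    (hz : 0 ≤ h) (x y : EuclideanSpace ℝ (Fin d))
    (hxy : K ≤ C * ((h + 1) * ((1 + ‖x‖) ^ (-(d : ℝ)) * (1 + ‖y‖) ^ (-(d : ℝ))))) :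
    K * pnorm d k x ^ α * pnorm d k y ^ β ≤
      C * (decayWeight d k (α + β) x * h + decayWeight d k (α + β) y * h
        + decayWeight d k α x * decayWeight d k β y) := by
  have hax := rpow_nonneg (pnorm_nonneg d k x) α
  have hby := rpow_nonneg (pnorm_nonneg d k y) β
  have hgx := rpow_nonneg (pnorm_nonneg d k x) (α + β)
  have hgy := rpow_nonneg (pnorm_nonneg d k y) (α + β)
  have hsym := rpow_mul_rpow_le (pnorm_nonneg d k x) (pnorm_nonneg d k y) hα hβ
  have hN : ∀ z : EuclideanSpace ℝ (Fin d),
      0 ≤ (1 + ‖z‖) ^ (-(d : ℝ)) ∧ (1 + ‖z‖) ^ (-(d : ℝ)) ≤ 1 := fun z =>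
    ⟨by positivity, rpow_le_one_of_one_le_of_nonpos (by simp) (by simp)⟩
  simp only [decayWeight]
  obtain ⟨hnx0, hnx1⟩ := hN x
  obtain ⟨hny0, hny1⟩ := hN y
  generalize (1 + ‖x‖) ^ (-(d : ℝ)) = nx at *
  generalize (1 + ‖y‖) ^ (-(d : ℝ)) = ny at *
  generalize pnorm d k x ^ α = a at *
  generalize pnorm d k y ^ β = b at *
  generalize pnorm d k x ^ (α + β) = gx at *
  generalize pnorm d k y ^ (α + β) = gy at *
  have e1 : gx * (nx * ny) ≤ gx * nx := by
    gcongr; exact mul_le_of_le_one_right hnx0 hny1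
  have e2 : gy * (nx * ny) ≤ gy * ny := by
    gcongr; exact mul_le_of_le_one_left hny0 hnx1
  calc _ ≤ C * ((h + 1) * (nx * ny)) * a * b := by gcongr
    _ = C * (h * ((a * b) * (nx * ny)) + a * nx * (b * ny)) := by ring
    _ ≤ C * (h * ((gx + gy) * (nx * ny)) + a * nx * (b * ny)) := by gcongr
    _ = C * (h * (gx * (nx * ny) + gy * (nx * ny)) + a * nx * (b * ny)) := by ring
    _ ≤ C * (h * (gx * nx + gy * ny) + a * nx * (b * ny)) := by gcongr
    _ = _ := by ring

/-! ### Integration -/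

/-- Translation invariance and Tonelli for the three terms of `weighted_kernel_le`. -/
lemma lintegral_conv_add_prod_lt_top {d : ℕ} {C : ENNReal}
    {A B G H : EuclideanSpace ℝ (Fin d) → ENNReal} (hC : C ≠ ⊤)
    (hAm : Measurable A) (hBm : Measurable B) (hGm : Measurable G) (hHm : Measurable H)
    (hAi : ∫⁻ z, A z < ⊤) (hBi : ∫⁻ z, B z < ⊤) (hGi : ∫⁻ z, G z < ⊤) (hHi : ∫⁻ z, H z < ⊤)
    (hG : ∀ z, G z ≠ ⊤) (hswap : ∀ x y, H (x - y) = H (y - x)) :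
    ∫⁻ x, ∫⁻ y, C * (G x * H (x - y) + G y * H (x - y) + A x * B y) < ⊤ := by
  have hm1 : Measurable fun q : EuclideanSpace ℝ (Fin d) × EuclideanSpace ℝ (Fin d) =>
      G q.1 * H (q.1 - q.2) :=
    (hGm.comp measurable_fst).mul (hHm.comp (measurable_fst.sub measurable_snd))
  have hm2 : Measurable fun q : EuclideanSpace ℝ (Fin d) × EuclideanSpace ℝ (Fin d) =>
      G q.2 * H (q.1 - q.2) :=
    (hGm.comp measurable_snd).mul (hHm.comp (measurable_fst.sub measurable_snd))
  have hT : ∫⁻ x, ∫⁻ y, G x * H (x - y) < ⊤ := by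
    have : ∀ x, ∫⁻ y, G x * H (x - y) = G x * ∫⁻ z, H z := fun x => by
      rw [lintegral_const_mul' _ _ (hG x), lintegral_sub_left_eq_self H x]
    simp_rw [this]
    rw [lintegral_mul_const' _ _ hHi.ne]
    exact ENNReal.mul_lt_top hGi hHi
  have hT' : ∫⁻ x, ∫⁻ y, G y * H (x - y) < ⊤ := by
    rw [lintegral_lintegral_swap hm2.aemeasurable]
    refine lt_of_eq_of_lt (lintegral_congr fun x => lintegral_congr fun y => ?_) hT
    rw [hswap y x]
  have hT'' : ∫⁻ x, ∫⁻ y, A x * B y < ⊤ := by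
    rw [lintegral_lintegral_mul hAm.aemeasurable hBm.aemeasurable]
    exact ENNReal.mul_lt_top hAi hBi
  have hI1 : Measurable fun x => ∫⁻ y, G x * H (x - y) := hm1.lintegral_prod_right'
  have hI2 : Measurable fun x => ∫⁻ y, G y * H (x - y) := hm2.lintegral_prod_right'
  have hI : Measurable fun x => (∫⁻ y, G x * H (x - y)) + ∫⁻ y, G y * H (x - y) := hI1.add hI2
  have hsum : ∫⁻ x, ∫⁻ y, C * (G x * H (x - y) + G y * H (x - y) + A x * B y) =
      C * ((∫⁻ x, ∫⁻ y, G x * H (x - y)) + (∫⁻ x, ∫⁻ y, G y * H (x - y))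
        + ∫⁻ x, ∫⁻ y, A x * B y) := by
    simp_rw [lintegral_const_mul' _ _ hC]
    congr 1
    rw [← lintegral_add_left hI1, ← lintegral_add_left hI]
    refine lintegral_congr fun x => ?_
    have h1 : Measurable fun y => G x * H (x - y) := hm1.comp measurable_prodMk_left
    have h2 : Measurable fun y => G y * H (x - y) := hm2.comp measurable_prodMk_left
    have h12 : Measurable fun y => G x * H (x - y) + G y * H (x - y) := h1.add h2
    rw [lintegral_add_left h12, lintegral_add_left h1]
  rw [hsum]
  exact ENNReal.mul_lt_top hC.lt_top
    (ENNReal.add_lt_top.2 ⟨ENNReal.add_lt_top.2 ⟨hT, hT'⟩, hT''⟩)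

/-- **Finiteness of the weighted Gagliardo seminorm for `s = 0`** (Remark after Theorem 3):
for `α, β, α+β ∈ (-k, 0)` and `u ∈ C_c^1(ℝ^d)`, the weighted double integral corresponding
to `s = 0` is finite. -/
theorem weighted_gagliardo_finite_s_zero
    (d k : ℕ) (p α β : ℝ)
    (hd : 1 ≤ d) (hp : 1 ≤ p)
    (hk : 1 ≤ k) (hkd : k ≤ d)
    (hα : α ∈ Ioo (-(k : ℝ)) 0) (hβ : β ∈ Ioo (-(k : ℝ)) 0)
    (hαβ : α + β ∈ Ioo (-(k : ℝ)) 0)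
    (u : EuclideanSpace ℝ (Fin d) → ℝ)
    (hu : ContDiff ℝ 1 u) (husupp : HasCompactSupport u) :
    ∫⁻ x, ∫⁻ y, ENNReal.ofReal
        (|u x - u y| ^ p * ‖x - y‖ ^ (-(d : ℝ))
          * pnorm d k x ^ α * pnorm d k y ^ β) < ⊤ := by
  obtain ⟨C, hC0, hC⟩ := exists_kernel_le hp hu husupp
  have hd' : (1 : ℝ) ≤ d := by exact_mod_cast hd
  have hfin := lintegral_conv_add_prod_lt_top (C := ENNReal.ofReal C) ENNReal.ofReal_ne_top
    (measurable_decayWeight d k α).ennreal_ofReal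
    (measurable_decayWeight d k β).ennreal_ofReal
    (measurable_decayWeight d k (α + β)).ennreal_ofReal
    (measurable_decayWeight d d (1 / 2 - d)).ennreal_ofReal
    (lintegral_decayWeight_lt_top hk hkd hα.1 hα.2)
    (lintegral_decayWeight_lt_top hk hkd hβ.1 hβ.2)
    (lintegral_decayWeight_lt_top hk hkd hαβ.1 hαβ.2)
    (lintegral_decayWeight_lt_top hd le_rfl (by linarith) (by linarith))
    (fun _ => ENNReal.ofReal_ne_top)
    (fun x y => by simp only [decayWeight, pnorm_self, norm_sub_rev])
  refine lt_of_le_of_lt (lintegral_mono fun x => lintegral_mono fun y => ?_) hfin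
  have hpt := weighted_kernel_le (k := k) hα.2 hβ.2 hC0
    (decayWeight_nonneg d d (1 / 2 - d) (x - y)) x y (hC x y)
  refine (ENNReal.ofReal_le_ofReal hpt).trans ?_
  rw [ENNReal.ofReal_mul hC0, ← ENNReal.ofReal_mul (decayWeight_nonneg _ _ _ _),
    ← ENNReal.ofReal_mul (decayWeight_nonneg _ _ _ _),
    ← ENNReal.ofReal_mul (decayWeight_nonneg _ _ _ _)]
  exact mul_le_mul_right
    (ENNReal.ofReal_add_le.trans (add_le_add_left ENNReal.ofReal_add_le _)) _
end
end

section
/- Let d ≥ 2, p ≥ 1, s ∈ (0,1), and assume α, β ∈ ℝ satisfy α, β, α+β ∈ (−d, sp). Set γ := (d+α+β−sp)/p and assume γ > 0. Then for every ε > 0: ∫_{B^c} ∫_{B^c} ||x|^{−γ−ε} − |y|^{−γ−ε}|^p |x−y|^{−d−sp} |x|^α |y|^β dy dx = (|𝕊^{d−1}|/(pε)) · 𝒞_ε, where 𝒞_ε := |𝕊^{d−2}| ∫₀¹ ∫_{−1}^{1} |1 − r^{γ+ε}|^p r^{sp−1} (r^{−α}+r^{−β}) (1−t²)^{(d−3)/2}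 (1−2rt+r²)^{−(d+sp)/2} dt dr. Moreover 𝒞_ε > 𝒞₁(d,s,p,α,β). -/
/-!
All integrands are nonnegative, so everything is computed first with the Lebesgue integral in
`[0, ∞]`, where Tonelli's theorem needs no integrability, and converted to Bochner integrals at
the end.

For fixed `x ≠ 0`, a rotation carries `x` to the first axis; slicing the spheres `‖y‖ = τ`
orthogonally to that axis (`lintegral_zonal`) and substituting `τ = r ‖x‖` turns the integral of a
radial function of `y` against `‖x - y‖ ^ (-q)` into a one-dimensional integral against the profile
`Φ(r)` (`lintegral_radial_kernel`). With `c = γ + ε` the integrand of the exterior integral is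
homogeneous, so `‖x‖ = ρ` separates: after exchanging the order of integration, the region
`1 ≤ ρ`, `1 ≤ ρ r` contributes
`∫ ρ in [max 1 r⁻¹, ∞), ρ ^ (-1 - p ε) = (max 1 r⁻¹) ^ (-p ε) / (p ε)`. The inversion
`Φ(1 / r) = r ^ (d + s p) Φ(r)` folds the range `r > 1` onto `r < 1`, where it produces the term
`r ^ (-β)`, while the range `r < 1` produces `r ^ (-α)` (`lintegral_ratio`, `lintegral_exterior`).

The constant is finite (`lintegral_ePhi_lt_top`): read backwards through the same polar coordinates,
it is an integral over the unit ball, with an integrable singularity at the origin because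
`α, β < s p`, and one at the unit vector `e` because `|1 - r ^ c| ^ p ≲ ‖e - y‖ ^ p` and `s < 1`.

Finally `C1` is the same integral with `c = γ`, and `|1 - r ^ c|` is strictly increasing in `c` for
`0 < r < 1`; as the constants are finite, strictness survives integration (`eConst_strictMono`).
-/

open MeasureTheory Real Set Filter Topology

noncomputable section

/-- Surface measure `|𝕊^m|` of the unit sphere `𝕊^m ⊆ ℝ^(m+1)`. -/
def sphereVol (m : ℕ) : ℝ :=
  2 * Real.pi ^ (((m : ℝ) + 1) / 2) / Real.Gamma (((m : ℝ) + 1) / 2)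

/-- The profile function `Φ_{d,s,p}(r)`. -/
def Phi (d : ℕ) (s p r : ℝ) : ℝ :=
  if d = 1 then (1 - r) ^ (-1 - s * p) + (1 + r) ^ (-1 - s * p)
  else sphereVol (d - 2) *
    ∫ t in Icc (-1 : ℝ) 1,
      (1 - t ^ 2) ^ (((d : ℝ) - 3) / 2) * (1 - 2 * t * r + r ^ 2) ^ (-(((d : ℝ) + s * p) / 2))

/-- The sharp constant `𝒞₁(d,s,p,α,β)` for the weighted fractional Hardy inequality with
point singularity. -/
def C1 (d : ℕ) (s p a b : ℝ) : ℝ :=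
  ∫ r in Ioo (0 : ℝ) 1,
    r ^ (s * p - 1) * (r ^ (-a) + r ^ (-b)) *
      |1 - r ^ (((d : ℝ) + a + b - s * p) / p)| ^ p * Phi d s p r

/-- The perturbed constant `𝒞_ε` appearing in the proof of Theorem 4.3. -/
def Ceps (d : ℕ) (s p a b γ ε : ℝ) : ℝ :=
  sphereVol (d - 2) *
    ∫ r in Ioo (0 : ℝ) 1, ∫ t in Icc (-1 : ℝ) 1,
      |1 - r ^ (γ + ε)| ^ p * r ^ (s * p - 1) * (r ^ (-a) + r ^ (-b)) *
        (1 - t ^ 2) ^ (((d : ℝ) - 3) / 2) * (1 - 2 * r * t + r ^ 2) ^ (-(((d : ℝ) + s * p) / 2))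

open scoped ENNReal

/-! ### Polar and axial coordinates -/

lemma sphereVol_pos (m : ℕ) : 0 < sphereVol m := by
  unfold sphereVol
  have : 0 < Real.Gamma (((m : ℝ) + 1) / 2) := Real.Gamma_pos_of_pos (by positivity)
  positivity

/-- The surface measure of the unit sphere is the dimension times the volume of the unit ball. -/
lemma finrank_mul_volume_ball (m : ℕ) :
    ((m + 1 : ℕ) : ℝ≥0∞) * volume (Metric.ball (0 : EuclideanSpace ℝ (Fin (m + 1))) 1)
      = ENNReal.ofReal (sphereVol m) := by
  rw [EuclideanSpace.volume_ball, ← ENNReal.ofReal_natCast, ENNReal.ofReal_one, one_pow, one_mul,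
    ← ENNReal.ofReal_mul (by positivity)]
  congr 1
  have h0 : 0 < ((m : ℝ) + 1) / 2 := by positivity
  have hG : 0 < Real.Gamma (((m : ℝ) + 1) / 2) := Real.Gamma_pos_of_pos h0
  have e : (√π) ^ (m + 1) = π ^ (((m : ℝ) + 1) / 2) := by
    rw [Real.sqrt_eq_rpow, ← Real.rpow_natCast, ← Real.rpow_mul pi_pos.le]
    congr 1; push_cast; ring
  simp only [Fintype.card_fin, e, sphereVol]
  push_cast
  rw [Real.Gamma_add_one h0.ne']
  field_simp

/-- Integration of a radial function in polar coordinates. -/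
lemma lintegral_radial (m : ℕ) (f : ℝ → ℝ≥0∞) (hf : Measurable f) :
    ∫⁻ x : EuclideanSpace ℝ (Fin (m + 1)), f ‖x‖
      = ENNReal.ofReal (sphereVol m) * ∫⁻ r in Ioi (0 : ℝ), ENNReal.ofReal (r ^ m) * f r := by
  set E := EuclideanSpace ℝ (Fin (m + 1))
  set μ : Measure E := volume
  calc
    ∫⁻ x, f ‖x‖ ∂μ = ∫⁻ x : ({(0)}ᶜ : Set E), f ‖x.1‖ ∂(μ.comap (↑)) := by
      rw [lintegral_subtype_comap (measurableSet_singleton _).compl fun x : E ↦ f ‖x‖,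
        restrict_compl_singleton]
    _ = ∫⁻ x, f x.2 ∂μ.toSphere.prod (.volumeIoiPow (Module.finrank ℝ E - 1)) := by
      rw [← μ.measurePreserving_homeomorphUnitSphereProd.lintegral_comp_emb
        (Homeomorph.measurableEmbedding _)]
      simp
    _ = (∫⁻ r : Ioi (0 : ℝ), f r ∂(Measure.volumeIoiPow (Module.finrank ℝ E - 1))) *
        μ.toSphere univ := by
      rw [lintegral_prod _ (by fun_prop)]
      simp
    _ = _ := by
      have hr : Module.finrank ℝ E = m + 1 := by simp [E]
      rw [Measure.toSphere_apply_univ, hr, finrank_mul_volume_ball, mul_comm,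
        Measure.volumeIoiPow, lintegral_withDensity_eq_lintegral_mul _ (by fun_prop) (by fun_prop)]
      simp only [Pi.mul_apply, Nat.add_sub_cancel]
      rw [lintegral_subtype_comap measurableSet_Ioi
        fun r : ℝ ↦ ENNReal.ofReal (r ^ m) * f r]

/-- Polar coordinates on the upper half-plane, with the cosine of the angle as the variable. -/
lemma lintegral_halfPlane (m : ℕ) (g : ℝ → ℝ → ℝ≥0∞) (hg : Measurable (Function.uncurry g)) :
    ∫⁻ u : ℝ, ∫⁻ v in Ioi (0 : ℝ), ENNReal.ofReal (v ^ m) * g (√(u ^ 2 + v ^ 2)) u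
      = ∫⁻ τ in Ioi (0 : ℝ), ENNReal.ofReal (τ ^ (m + 1)) *
          ∫⁻ t in Ioo (-1 : ℝ) 1, ENNReal.ofReal ((1 - t ^ 2) ^ (((m : ℝ) - 1) / 2)) *
            g τ (τ * t) := by
  set F : ℝ × ℝ → ℝ≥0∞ := fun q ↦
    (Ioi (0 : ℝ)).indicator (fun v ↦ ENNReal.ofReal (v ^ m) * g (√(q.1 ^ 2 + v ^ 2)) q.1) q.2
    with hF
  have hFm : Measurable F := by
    have : F = (Prod.snd ⁻¹' (Ioi (0 : ℝ))).indicator (fun q : ℝ × ℝ ↦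
        ENNReal.ofReal (q.2 ^ m) * Function.uncurry g (√(q.1 ^ 2 + q.2 ^ 2), q.1)) := by
      ext q; simp [hF, indicator, Function.uncurry]
    rw [this]
    exact Measurable.indicator (by fun_prop) (measurable_snd measurableSet_Ioi)
  have h1 : ∫⁻ u : ℝ, ∫⁻ v in Ioi (0 : ℝ), ENNReal.ofReal (v ^ m) * g (√(u ^ 2 + v ^ 2)) u
      = ∫⁻ q : ℝ × ℝ, F q := by
    rw [Measure.volume_eq_prod, lintegral_prod _ hFm.aemeasurable]
    refine lintegral_congr fun u ↦ ?_
    rw [← lintegral_indicator measurableSet_Ioi]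
  rw [h1, ← lintegral_comp_polarCoord_symm, polarCoord_target, Measure.volume_eq_prod,
    ← Measure.prod_restrict, lintegral_prod _ (by
      have := continuous_polarCoord_symm.measurable
      fun_prop)]
  refine setLIntegral_congr_fun measurableSet_Ioi fun τ (hτ : 0 < τ) ↦ ?_
  have h2 : Real.cos '' (Ioo 0 π) = Ioo (-1) 1 := by
    ext t
    constructor
    · rintro ⟨θ, hθ, rfl⟩
      have := Real.sin_pos_of_mem_Ioo hθ
      have := Real.sin_sq_add_cos_sq θ
      constructor <;> nlinarith
    · intro ht
      refine ⟨Real.arccos t, ⟨?_, ?_⟩, Real.cos_arccos ht.1.le ht.2.le⟩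
      · exact Real.arccos_pos.2 ht.2
      · refine lt_of_le_of_ne (Real.arccos_le_pi t) fun h ↦ ?_
        have := Real.arccos_eq_pi.1 h
        linarith [ht.1]
  have h3 := lintegral_image_eq_lintegral_abs_deriv_mul (s := Ioo 0 π) (f := Real.cos)
    (f' := fun θ ↦ -Real.sin θ) measurableSet_Ioo
    (fun θ _ ↦ (Real.hasDerivAt_cos θ).hasDerivWithinAt)
    (Real.injOn_cos.mono Ioo_subset_Icc_self)
    (fun t ↦ ENNReal.ofReal ((1 - t ^ 2) ^ (((m : ℝ) - 1) / 2)) * g τ (τ * t))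
  rw [h2] at h3
  rw [h3, ← lintegral_const_mul' _ _ ENNReal.ofReal_ne_top]
  have hsub : Ioo 0 π ⊆ Ioo (-π) π := Ioo_subset_Ioo_left (by linarith [pi_pos])
  rw [← lintegral_indicator measurableSet_Ioo, ← lintegral_indicator measurableSet_Ioo]
  refine lintegral_congr fun θ ↦ ?_
  by_cases hθ : θ ∈ Ioo 0 π
  · have hs := Real.sin_pos_of_mem_Ioo hθ
    rw [indicator_of_mem (hsub hθ), indicator_of_mem hθ]
    have hv : τ * Real.sin θ ∈ Ioi (0 : ℝ) := mul_pos hτ hs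
    have hq : √((τ * Real.cos θ) ^ 2 + (τ * Real.sin θ) ^ 2) = τ := by
      rw [show (τ * Real.cos θ) ^ 2 + (τ * Real.sin θ) ^ 2 = τ ^ 2 by
        linear_combination τ ^ 2 * Real.sin_sq_add_cos_sq θ, Real.sqrt_sq hτ.le]
    simp only [polarCoord_symm_apply, hF, smul_eq_mul]
    rw [indicator_of_mem hv, hq, ← mul_assoc, ← mul_assoc, ← mul_assoc,
      ← ENNReal.ofReal_mul hτ.le, ← ENNReal.ofReal_mul (by positivity),
      ← ENNReal.ofReal_mul (by positivity)]
    congr 2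
    have h4 : 1 - Real.cos θ ^ 2 = Real.sin θ ^ 2 := by
      linarith [Real.sin_sq_add_cos_sq θ]
    rw [h4, ← Real.rpow_natCast (Real.sin θ) 2, ← Real.rpow_mul hs.le, abs_neg, abs_of_pos hs,
      mul_pow, mul_assoc (τ ^ (m + 1))]
    nth_rw 2 [← Real.rpow_one (Real.sin θ)]
    rw [← Real.rpow_add hs, show (1 : ℝ) + ((2 : ℕ) : ℝ) * (((m : ℝ) - 1) / 2) = m by
      push_cast; ring, Real.rpow_natCast]
    ring
  -- The lower half-plane `-π < θ ≤ 0`, where `F` vanishes, and angles outside `(-π, π)`.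
  · rw [indicator_of_notMem hθ]
    by_cases hθ' : θ ∈ Ioo (-π) π
    · have : θ ≤ 0 := by
        by_contra h
        exact hθ ⟨not_le.1 h, hθ'.2⟩
      have hs := Real.sin_nonpos_of_nonpos_of_neg_pi_le this hθ'.1.le
      rw [indicator_of_mem hθ']
      have hv : τ * Real.sin θ ∉ Ioi (0 : ℝ) := by
        simp only [mem_Ioi, not_lt]; nlinarith
      simp only [polarCoord_symm_apply, hF, smul_eq_mul]
      rw [indicator_of_notMem hv, mul_zero]
    · rw [indicator_of_notMem hθ']

/-- Integration of an axially symmetric function: the sphere is sliced by the hyperplanes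
orthogonal to the axis. -/
lemma lintegral_zonal (m : ℕ) (g : ℝ → ℝ → ℝ≥0∞) (hg : Measurable (Function.uncurry g)) :
    ∫⁻ y : EuclideanSpace ℝ (Fin (m + 2)), g ‖y‖ (y 0)
      = ENNReal.ofReal (sphereVol m) *
        ∫⁻ τ in Ioi (0 : ℝ), ENNReal.ofReal (τ ^ (m + 1)) *
          ∫⁻ t in Ioo (-1 : ℝ) 1, ENNReal.ofReal ((1 - t ^ 2) ^ (((m : ℝ) - 1) / 2)) *
            g τ (τ * t) := by
  rw [← lintegral_halfPlane m g hg]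
  have hmp := (volume_preserving_piFinSuccAbove (fun _ : Fin (m + 2) ↦ ℝ) 0).comp
    (PiLp.volume_preserving_ofLp (Fin (m + 2)))
  have hmp2 : MeasurePreserving
      (Prod.map id WithLp.ofLp : ℝ × EuclideanSpace ℝ (Fin (m + 1)) → ℝ × (Fin (m + 1) → ℝ))
      volume volume :=
    (MeasurePreserving.id (volume : Measure ℝ)).prod (PiLp.volume_preserving_ofLp (Fin (m + 1)))
  have e1 : ∫⁻ y : EuclideanSpace ℝ (Fin (m + 2)), g ‖y‖ (y 0)
      = ∫⁻ q : ℝ × (Fin (m + 1) → ℝ), g (√(q.1 ^ 2 + ∑ i, q.2 i ^ 2)) q.1 := by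
    refine Eq.trans ?_ (hmp.lintegral_comp (f := fun q : ℝ × (Fin (m + 1) → ℝ) ↦
      Function.uncurry g (√(q.1 ^ 2 + ∑ i, q.2 i ^ 2), q.1)) (by fun_prop))
    refine lintegral_congr fun y ↦ ?_
    simp [EuclideanSpace.norm_eq, Fin.sum_univ_succ, Function.uncurry, Fin.tail]
  have e2 : ∫⁻ q : ℝ × (Fin (m + 1) → ℝ), g (√(q.1 ^ 2 + ∑ i, q.2 i ^ 2)) q.1
      = ∫⁻ q : ℝ × EuclideanSpace ℝ (Fin (m + 1)), g (√(q.1 ^ 2 + ‖q.2‖ ^ 2)) q.1 := by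
    refine (hmp2.lintegral_comp (f := fun q : ℝ × (Fin (m + 1) → ℝ) ↦
      Function.uncurry g (√(q.1 ^ 2 + ∑ i, q.2 i ^ 2), q.1)) (by fun_prop)).symm.trans ?_
    refine lintegral_congr fun y ↦ ?_
    simp [EuclideanSpace.norm_sq_eq, Function.uncurry]
  rw [e1, e2, Measure.volume_eq_prod, lintegral_prod _ (by
    have : Measurable fun q : ℝ × EuclideanSpace ℝ (Fin (m + 1)) ↦
      Function.uncurry g (√(q.1 ^ 2 + ‖q.2‖ ^ 2), q.1) := by fun_prop
    exact this.aemeasurable), ← lintegral_const_mul' _ _ ENNReal.ofReal_ne_top]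
  refine lintegral_congr fun u ↦ ?_
  have := lintegral_radial m (fun v ↦ Function.uncurry g (√(u ^ 2 + v ^ 2), u)) (by fun_prop)
  exact this

/-! ### The profile function and the kernel -/

/-- The profile function `Φ` as an extended nonnegative number, in dimension `m + 2` and with the
kernel exponent `q` in place of `d + sp`: the integral over the unit sphere of
`θ ↦ ‖e - r θ‖ ^ (-q)`, where `e` is a unit vector. -/
def ePhi (m : ℕ) (q r : ℝ) : ℝ≥0∞ :=
  ENNReal.ofReal (sphereVol m) *
    ∫⁻ t in Ioo (-1 : ℝ) 1, ENNReal.ofReal ((1 - t ^ 2) ^ (((m : ℝ) - 1) / 2)) *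
      ENNReal.ofReal ((1 - 2 * t * r + r ^ 2) ^ (-(q / 2)))

@[fun_prop]
lemma measurable_ePhi (m : ℕ) (q : ℝ) : Measurable (ePhi m q) := by
  unfold ePhi
  refine Measurable.const_mul ?_ _
  refine Measurable.lintegral_prod_right' (f := fun z : ℝ × ℝ ↦
    ENNReal.ofReal ((1 - z.2 ^ 2) ^ (((m : ℝ) - 1) / 2)) *
      ENNReal.ofReal ((1 - 2 * z.2 * z.1 + z.1 ^ 2) ^ (-(q / 2)))) (by fun_prop)

/-- The behaviour of the profile under inversion, from `‖e - r⁻¹ θ‖ = r⁻¹ ‖e - r θ‖` for unit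
vectors `e` and `θ`. -/
lemma ePhi_inv (m : ℕ) (q r : ℝ) (hr : 0 < r) :
    ePhi m q r⁻¹ = ENNReal.ofReal (r ^ q) * ePhi m q r := by
  unfold ePhi
  rw [mul_left_comm, ← lintegral_const_mul' (ENNReal.ofReal (r ^ q)) _ ENNReal.ofReal_ne_top]
  congr 1
  refine setLIntegral_congr_fun measurableSet_Ioo fun t ht ↦ ?_
  have h0 : 0 ≤ 1 - 2 * t * r + r ^ 2 := by nlinarith [ht.1, ht.2, sq_nonneg (r - t)]
  have h1 : 1 - 2 * t * r⁻¹ + r⁻¹ ^ 2 = (r ^ (2 : ℝ))⁻¹ * (1 - 2 * t * r + r ^ 2) := by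
    rw [Real.rpow_two]; field_simp; ring
  rw [mul_left_comm, h1, Real.mul_rpow (by positivity) h0, ENNReal.ofReal_mul (by positivity),
    ← Real.rpow_neg hr.le, ← Real.rpow_mul hr.le]
  congr 4
  ring

/-- The change of variables `τ = ρ r` on the half-line. -/
lemma lintegral_Ioi_scale (ρ : ℝ) (hρ : 0 < ρ) (f : ℝ → ℝ≥0∞) :
    ∫⁻ τ in Ioi (0 : ℝ), f τ = ∫⁻ r in Ioi (0 : ℝ), ENNReal.ofReal ρ * f (ρ * r) := by
  have h := lintegral_image_eq_lintegral_abs_deriv_mul (s := Ioi (0 : ℝ)) (f := fun r ↦ ρ * r)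
    (f' := fun _ ↦ ρ) measurableSet_Ioi
    (fun r _ ↦ by simpa using ((hasDerivAt_id r).const_mul ρ).hasDerivWithinAt)
    ((mul_right_injective₀ hρ.ne').injOn) f
  rwa [image_mul_left_Ioi hρ, mul_zero, abs_of_pos hρ] at h

/-- The change of variables `r = u⁻¹`. -/
lemma lintegral_Ioi_one_inv (f : ℝ → ℝ≥0∞) :
    ∫⁻ r in Ioi (1 : ℝ), f r = ∫⁻ u in Ioo (0 : ℝ) 1, ENNReal.ofReal ((u ^ 2)⁻¹) * f u⁻¹ := by
  have h := lintegral_image_eq_lintegral_abs_deriv_mul (s := Ioo (0 : ℝ) 1) (f := fun r ↦ r⁻¹)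
    (f' := fun u ↦ -(u ^ 2)⁻¹) measurableSet_Ioo
    (fun r hr ↦ (hasDerivAt_inv hr.1.ne').hasDerivWithinAt)
    ((inv_injective (G := ℝ)).injOn) f
  have hi : (fun r : ℝ ↦ r⁻¹) '' Ioo 0 1 = Ioi 1 := by
    ext r
    constructor
    · rintro ⟨u, hu, rfl⟩
      exact (one_lt_inv₀ hu.1).2 hu.2
    · intro hr
      have hr' : (1 : ℝ) < r := hr
      exact ⟨r⁻¹, ⟨by positivity, inv_lt_one_of_one_lt₀ hr'⟩, inv_inv r⟩
  rw [hi] at h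
  rw [h]
  refine setLIntegral_congr_fun measurableSet_Ioo fun u _ ↦ ?_
  simp only [abs_neg, abs_of_nonneg (inv_nonneg.2 (sq_nonneg u))]

/-- Some linear isometry maps `x` to a multiple of the first basis vector. -/
lemma exists_isometry_axis (m : ℕ) (x : EuclideanSpace ℝ (Fin (m + 2))) :
    ∃ R : EuclideanSpace ℝ (Fin (m + 2)) ≃ₗᵢ[ℝ] EuclideanSpace ℝ (Fin (m + 2)),
      R x = EuclideanSpace.single 0 ‖x‖ :=
  ⟨_, Submodule.reflection_sub (by simp)⟩

/-- Integral of a radial function against the kernel `‖x - y‖ ^ (-q)`. -/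
lemma lintegral_radial_kernel (m : ℕ) (q : ℝ) (h : ℝ → ℝ≥0∞) (hh : Measurable h)
    (x : EuclideanSpace ℝ (Fin (m + 2))) (hx : x ≠ 0) :
    ∫⁻ y, h ‖y‖ * ENNReal.ofReal (‖x - y‖ ^ (-q))
      = ∫⁻ r in Ioi (0 : ℝ), ENNReal.ofReal (‖x‖ ^ ((m : ℝ) + 2 - q) * r ^ (m + 1)) *
          h (‖x‖ * r) * ePhi m q r := by
  obtain ⟨R, hR⟩ := exists_isometry_axis m x
  set ρ := ‖x‖ with hρd
  have hρ : 0 < ρ := norm_pos_iff.2 hx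
  set g : ℝ → ℝ → ℝ≥0∞ := fun τ u ↦
    h τ * ENNReal.ofReal ((ρ ^ 2 - 2 * ρ * u + τ ^ 2) ^ (-(q / 2))) with hg
  have hgm : Measurable (Function.uncurry g) := by
    simp only [hg, Function.uncurry_def]; fun_prop
  have e1 : ∫⁻ y, h ‖y‖ * ENNReal.ofReal (‖x - y‖ ^ (-q))
      = ∫⁻ y : EuclideanSpace ℝ (Fin (m + 2)), g ‖y‖ (y 0) := by
    have hm : Measurable fun y : EuclideanSpace ℝ (Fin (m + 2)) ↦
        Function.uncurry g (‖y‖, y 0) := by fun_prop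
    refine Eq.trans ?_ (R.measurePreserving.lintegral_comp hm)
    refine lintegral_congr fun y ↦ ?_
    simp only [hg, LinearIsometryEquiv.norm_map]
    congr 2
    have hn : ‖x - y‖ ^ 2 = ρ ^ 2 - 2 * ρ * (R y) 0 + ‖y‖ ^ 2 := by
      rw [← R.norm_map (x - y), map_sub, hR, norm_sub_sq_real, R.norm_map,
        EuclideanSpace.inner_single_left]
      simp [abs_of_pos hρ]
      ring
    rw [← hn, ← Real.rpow_natCast, ← Real.rpow_mul (norm_nonneg _)]
    congr 1
    push_cast
    ring
  rw [e1, lintegral_zonal m g hgm, lintegral_Ioi_scale ρ hρ,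
    ← lintegral_const_mul' _ _ ENNReal.ofReal_ne_top]
  refine setLIntegral_congr_fun measurableSet_Ioi fun r (hr : 0 < r) ↦ ?_
  have e2 : ∫⁻ t in Ioo (-1 : ℝ) 1, ENNReal.ofReal ((1 - t ^ 2) ^ (((m : ℝ) - 1) / 2)) *
        g (ρ * r) (ρ * r * t)
      = h (ρ * r) * ENNReal.ofReal (ρ ^ (-q)) *
        ∫⁻ t in Ioo (-1 : ℝ) 1, ENNReal.ofReal ((1 - t ^ 2) ^ (((m : ℝ) - 1) / 2)) *
          ENNReal.ofReal ((1 - 2 * t * r + r ^ 2) ^ (-(q / 2))) := by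
    rw [← lintegral_const_mul _ (by fun_prop)]
    refine setLIntegral_congr_fun measurableSet_Ioo fun t ht ↦ ?_
    have h0 : 0 ≤ 1 - 2 * t * r + r ^ 2 := by nlinarith [ht.1, ht.2, sq_nonneg (r - t)]
    have h1 : ρ ^ 2 - 2 * ρ * (ρ * r * t) + (ρ * r) ^ 2
        = ρ ^ (2 : ℝ) * (1 - 2 * t * r + r ^ 2) := by
      rw [Real.rpow_two]; ring
    simp only [hg]
    rw [h1, Real.mul_rpow (by positivity) h0, ENNReal.ofReal_mul (by positivity),
      ← Real.rpow_mul hρ.le, show (2 : ℝ) * -(q / 2) = -q by ring]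
    ring
  rw [e2, ePhi]
  have e3 : ENNReal.ofReal (ρ ^ ((m : ℝ) + 2 - q) * r ^ (m + 1))
      = ENNReal.ofReal ρ * ENNReal.ofReal ((ρ * r) ^ (m + 1)) * ENNReal.ofReal (ρ ^ (-q)) := by
    rw [← ENNReal.ofReal_mul hρ.le, ← ENNReal.ofReal_mul (by positivity)]
    congr 1
    have : ρ ^ ((m : ℝ) + 2 - q) = ρ * ρ ^ (m + 1) * ρ ^ (-q) := by
      rw [sub_eq_add_neg, Real.rpow_add hρ, ← pow_succ', ← Real.rpow_natCast]
      congr 2; push_cast; ring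
    rw [this, mul_pow]; ring
  rw [e3]
  ring

/-! ### Finiteness of the constant -/

lemma lintegral_Ioo_rpow_lt_top {a R : ℝ} (ha : -1 < a) :
    ∫⁻ r in Ioo (0 : ℝ) R, ENNReal.ofReal (r ^ a) < ∞ := by
  have h := (intervalIntegral.intervalIntegrable_rpow' ha (a := 0) (b := R)).1
  rw [IntegrableOn] at h
  rw [← restrict_Ioo_eq_restrict_Ioc] at h
  have h2 := h.lintegral_lt_top
  exact h2

/-- Powers `‖y‖ ^ e` with `e` above minus the dimension are integrable on balls. -/
lemma lintegral_ball_rpow_lt_top (m : ℕ) {e R : ℝ} (he : -((m : ℝ) + 2) < e) :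
    ∫⁻ y : EuclideanSpace ℝ (Fin (m + 2)),
      (Iio R).indicator (fun τ ↦ ENNReal.ofReal (τ ^ e)) ‖y‖ < ∞ := by
  rw [lintegral_radial (m + 1) _ (Measurable.indicator (by fun_prop) measurableSet_Iio)]
  refine ENNReal.mul_lt_top ENNReal.ofReal_lt_top ?_
  have h : ∫⁻ r in Ioi (0 : ℝ), ENNReal.ofReal (r ^ (m + 1)) *
        (Iio R).indicator (fun τ ↦ ENNReal.ofReal (τ ^ e)) r
      = ∫⁻ r in Ioo (0 : ℝ) R, ENNReal.ofReal (r ^ ((m : ℝ) + 1 + e)) := by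
    rw [← lintegral_indicator measurableSet_Ioi, ← lintegral_indicator measurableSet_Ioo]
    refine lintegral_congr fun r ↦ ?_
    by_cases h0 : 0 < r
    · by_cases h1 : r < R
      · rw [indicator_of_mem (show r ∈ Ioi (0 : ℝ) from h0),
          indicator_of_mem (show r ∈ Iio R from h1),
          indicator_of_mem (show r ∈ Ioo 0 R from ⟨h0, h1⟩), ← ENNReal.ofReal_mul (by positivity),
          Real.rpow_add h0, ← Real.rpow_natCast]
        push_cast
        rfl
      · rw [indicator_of_mem (show r ∈ Ioi (0 : ℝ) from h0),
          indicator_of_notMem (show r ∉ Iio R from h1),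
          indicator_of_notMem (fun h : r ∈ Ioo 0 R ↦ h1 h.2), mul_zero]
    · rw [indicator_of_notMem (show r ∉ Ioi (0 : ℝ) from h0),
          indicator_of_notMem (fun h : r ∈ Ioo 0 R ↦ h0 h.1)]
  rw [h]
  exact lintegral_Ioo_rpow_lt_top (by linarith)

/-- Linear vanishing of `1 - r ^ c` at `r = 1`: Bernoulli's inequality if `1 ≤ c`. -/
lemma one_sub_rpow_le {c r : ℝ} (hc : 0 < c) (h0 : 0 ≤ r) (h1 : r ≤ 1) :
    |1 - r ^ c| ≤ max 1 c * (1 - r) := by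
  have h2 : r ^ c ≤ 1 := Real.rpow_le_one h0 h1 hc.le
  rw [abs_of_nonneg (by linarith)]
  rcases le_total 1 c with h | h
  · have := one_add_mul_self_le_rpow_one_add (s := r - 1) (by linarith) h
    rw [max_eq_right h]
    rw [show 1 + (r - 1) = r by ring] at this
    linarith
  · rw [max_eq_left h]
    have := Real.rpow_le_rpow_of_exponent_ge' h0 h1 hc.le h
    rw [Real.rpow_one] at this
    linarith

/-- Convergence of the radial integral defining the sharp constant. Read backwards through polar
coordinates it is an integral over the unit ball of `ℝ ^ (m + 2)`, which near the origin is
dominated by `‖y‖ ^ (s p - (m + 2) - a)` and near the unit vector `e` by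
`‖e - y‖ ^ (p - (m + 2) - s p)`. -/
lemma lintegral_ePhi_lt_top (m : ℕ) {s p a c : ℝ} (hp : 1 ≤ p) (hs : s ∈ Ioo (0 : ℝ) 1)
    (ha : a < s * p) (hc : 0 < c) :
    ∫⁻ r in Ioo (0 : ℝ) 1, ENNReal.ofReal (|1 - r ^ c| ^ p * r ^ (s * p - 1) * r ^ (-a)) *
      ePhi m ((m : ℝ) + 2 + s * p) r < ∞ := by
  set q : ℝ := (m : ℝ) + 2 + s * p with hq
  have hp0 : 0 < p := by linarith
  have hsp : 0 < s * p := mul_pos hs.1 hp0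
  have hsp' : s * p < p := by nlinarith [hs.2]
  have hqpos : 0 < q := by positivity
  set b : ℝ := s * p - 1 - ((m : ℝ) + 1) - a with hb
  set h : ℝ → ℝ≥0∞ := (Ioo (0 : ℝ) 1).indicator
    fun r ↦ ENNReal.ofReal (|1 - r ^ c| ^ p * r ^ b) with hh
  have hhm : Measurable h := Measurable.indicator (by fun_prop) measurableSet_Ioo
  set e : EuclideanSpace ℝ (Fin (m + 2)) := EuclideanSpace.single 0 1 with he
  have hen : ‖e‖ = 1 := by simp [he]
  have key := lintegral_radial_kernel m q h hhm e (by rw [← norm_ne_zero_iff, hen]; exact one_ne_zero)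
  have e1 : ∫⁻ r in Ioi (0 : ℝ), ENNReal.ofReal (‖e‖ ^ ((m : ℝ) + 2 - q) * r ^ (m + 1)) *
          h (‖e‖ * r) * ePhi m q r
      = ∫⁻ r in Ioo (0 : ℝ) 1, ENNReal.ofReal (|1 - r ^ c| ^ p * r ^ (s * p - 1) * r ^ (-a)) *
          ePhi m q r := by
    rw [← lintegral_indicator measurableSet_Ioi, ← lintegral_indicator measurableSet_Ioo]
    refine lintegral_congr fun r ↦ ?_
    by_cases h0 : 0 < r
    · rw [indicator_of_mem (show r ∈ Ioi (0 : ℝ) from h0), hen, one_mul, Real.one_rpow, one_mul, hh]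
      by_cases h1 : r ∈ Ioo (0 : ℝ) 1
      · rw [indicator_of_mem h1, indicator_of_mem h1, ← ENNReal.ofReal_mul (by positivity)]
        congr 2
        rw [mul_assoc, ← Real.rpow_add h0, mul_left_comm, ← Real.rpow_natCast, ← Real.rpow_add h0]
        congr 2
        rw [hb]; push_cast; ring
      · rw [indicator_of_notMem h1, indicator_of_notMem h1, mul_zero, zero_mul]
    · rw [indicator_of_notMem (show r ∉ Ioi (0 : ℝ) from h0),
        indicator_of_notMem (fun h : r ∈ Ioo (0 : ℝ) 1 ↦ h0 h.1)]
  rw [← e1, ← key]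
  set K : ℝ := max 1 ((1 / 2 : ℝ) ^ b) with hK
  set A : ℝ := (1 / 2 : ℝ) ^ (-q) with hA
  set B : ℝ := K * max 1 c ^ p with hB
  have hbound : ∀ y : EuclideanSpace ℝ (Fin (m + 2)),
      h ‖y‖ * ENNReal.ofReal (‖e - y‖ ^ (-q)) ≤
        ENNReal.ofReal A * (Iio (1 : ℝ)).indicator (fun τ ↦ ENNReal.ofReal (τ ^ b)) ‖y‖ +
        ENNReal.ofReal B * (Iio (2 : ℝ)).indicator (fun τ ↦ ENNReal.ofReal (τ ^ (p - q))) ‖e - y‖ := by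
    intro y
    by_cases hy : ‖y‖ ∈ Ioo (0 : ℝ) 1
    · have hd1 : 1 - ‖y‖ ≤ ‖e - y‖ := by
        have := norm_sub_norm_le e y; rwa [hen] at this
      have hd0 : 0 < ‖e - y‖ := by linarith [hy.2]
      have hd2 : ‖e - y‖ < 2 := by
        have := norm_sub_le e y; rw [hen] at this; linarith [hy.2]
      have hc1 : ‖y‖ ^ c ≤ 1 := Real.rpow_le_one hy.1.le hy.2.le hc.le
      have hc0 : 0 ≤ ‖y‖ ^ c := by positivity
      rw [hh, indicator_of_mem hy, indicator_of_mem (show ‖y‖ ∈ Iio (1 : ℝ) from hy.2),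
        indicator_of_mem (show ‖e - y‖ ∈ Iio (2 : ℝ) from hd2),
        ← ENNReal.ofReal_mul (by positivity), ← ENNReal.ofReal_mul (by positivity),
        ← ENNReal.ofReal_mul (by positivity)]
      -- Away from `e` the kernel is bounded; away from the origin `‖y‖ ^ b` is.
      rcases le_total ‖y‖ (1 / 2) with hy2 | hy2
      · refine le_trans (ENNReal.ofReal_le_ofReal ?_) le_self_add
        have t1 : |1 - ‖y‖ ^ c| ^ p ≤ 1 :=
          Real.rpow_le_one (abs_nonneg _) (by rw [abs_of_nonneg (by linarith)]; linarith) hp0.le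
        have t2 : ‖e - y‖ ^ (-q) ≤ A :=
          Real.rpow_le_rpow_of_nonpos (by norm_num) (by linarith) (by linarith)
        have t3 : 0 ≤ ‖y‖ ^ b := by positivity
        calc |1 - ‖y‖ ^ c| ^ p * ‖y‖ ^ b * ‖e - y‖ ^ (-q) ≤ 1 * ‖y‖ ^ b * A := by gcongr
          _ = A * ‖y‖ ^ b := by ring
      · refine le_trans (ENNReal.ofReal_le_ofReal ?_) le_add_self
        have t1 : |1 - ‖y‖ ^ c| ^ p ≤ max 1 c ^ p * ‖e - y‖ ^ p := by
          rw [← Real.mul_rpow (by positivity) (by positivity)]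
          refine Real.rpow_le_rpow (abs_nonneg _) ?_ hp0.le
          refine (one_sub_rpow_le hc hy.1.le hy.2.le).trans ?_
          gcongr
        have t2 : ‖y‖ ^ b ≤ K := by
          rcases le_total 0 b with h | h
          · exact (Real.rpow_le_one hy.1.le hy.2.le h).trans (le_max_left _ _)
          · exact (Real.rpow_le_rpow_of_nonpos (by norm_num) hy2 h).trans (le_max_right _ _)
        have t3 : ‖e - y‖ ^ (p - q) = ‖e - y‖ ^ p * ‖e - y‖ ^ (-q) := by
          rw [← Real.rpow_add hd0, sub_eq_add_neg p q]
        calc |1 - ‖y‖ ^ c| ^ p * ‖y‖ ^ b * ‖e - y‖ ^ (-q)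
            ≤ (max 1 c ^ p * ‖e - y‖ ^ p) * K * ‖e - y‖ ^ (-q) := by gcongr
          _ = B * ‖e - y‖ ^ (p - q) := by rw [t3, hB]; ring
    · rw [hh, indicator_of_notMem hy, zero_mul]
      exact zero_le
  refine (lintegral_mono hbound).trans_lt ?_
  have hm1 : Measurable fun y : EuclideanSpace ℝ (Fin (m + 2)) ↦
      (Iio (1 : ℝ)).indicator (fun τ ↦ ENNReal.ofReal (τ ^ b)) ‖y‖ :=
    (Measurable.indicator (f := fun τ : ℝ ↦ ENNReal.ofReal (τ ^ b)) (by fun_prop)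
      measurableSet_Iio).comp measurable_norm
  rw [lintegral_add_left (hm1.const_mul _), lintegral_const_mul' _ _ ENNReal.ofReal_ne_top,
    lintegral_const_mul' _ _ ENNReal.ofReal_ne_top,
    lintegral_sub_left_eq_self (fun y : EuclideanSpace ℝ (Fin (m + 2)) ↦
      (Iio (2 : ℝ)).indicator (fun τ ↦ ENNReal.ofReal (τ ^ (p - q))) ‖y‖) e]
  refine ENNReal.add_lt_top.2 ⟨ENNReal.mul_lt_top ENNReal.ofReal_lt_top ?_,
    ENNReal.mul_lt_top ENNReal.ofReal_lt_top ?_⟩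
  · exact lintegral_ball_rpow_lt_top m (by rw [hb]; linarith)
  · exact lintegral_ball_rpow_lt_top m (by rw [hq]; linarith)

/-! ### The exterior integral -/

/-- The constant `𝒞_ε` as an extended nonnegative number, in dimension `m + 2` and with
`c = γ + ε`. The value `c = γ` gives the constant `𝒞₁`. -/
def eConst (m : ℕ) (s p α β c : ℝ) : ℝ≥0∞ :=
  ∫⁻ r in Ioo (0 : ℝ) 1,
    ENNReal.ofReal (|1 - r ^ c| ^ p * r ^ (s * p - 1) * (r ^ (-α) + r ^ (-β))) *
      ePhi m ((m : ℝ) + 2 + s * p) r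

lemma eConst_eq_add (m : ℕ) (s p α β c : ℝ) :
    eConst m s p α β c
      = (∫⁻ r in Ioo (0 : ℝ) 1, ENNReal.ofReal (|1 - r ^ c| ^ p * r ^ (s * p - 1) * r ^ (-α)) *
          ePhi m ((m : ℝ) + 2 + s * p) r) +
        ∫⁻ r in Ioo (0 : ℝ) 1, ENNReal.ofReal (|1 - r ^ c| ^ p * r ^ (s * p - 1) * r ^ (-β)) *
          ePhi m ((m : ℝ) + 2 + s * p) r := by
  unfold eConst
  rw [← lintegral_add_left (by fun_prop)]
  refine setLIntegral_congr_fun measurableSet_Ioo fun r hr ↦ ?_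
  have h0 := hr.1
  rw [mul_add, ENNReal.ofReal_add (by positivity) (by positivity), add_mul]

lemma eConst_lt_top (m : ℕ) {s p α β c : ℝ} (hp : 1 ≤ p) (hs : s ∈ Ioo (0 : ℝ) 1)
    (hα : α < s * p) (hβ : β < s * p) (hc : 0 < c) : eConst m s p α β c < ∞ := by
  rw [eConst_eq_add]
  exact ENNReal.add_lt_top.2
    ⟨lintegral_ePhi_lt_top m hp hs hα hc, lintegral_ePhi_lt_top m hp hs hβ hc⟩

lemma lintegral_Ici_rpow {κ a : ℝ} (hκ : 0 < κ) (ha : 0 < a) :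
    ∫⁻ ρ in Ici a, ENNReal.ofReal (ρ ^ (-1 - κ)) = ENNReal.ofReal (a ^ (-κ) / κ) := by
  have hlt : -1 - κ < -1 := by linarith
  rw [← restrict_Ioi_eq_restrict_Ici, ← ofReal_integral_eq_lintegral_ofReal
    (integrableOn_Ioi_rpow_of_lt hlt ha), integral_Ioi_rpow_of_lt hlt ha]
  · congr 1
    rw [show -1 - κ + 1 = -κ by ring, neg_div_neg_eq]
  · filter_upwards [ae_restrict_mem measurableSet_Ioi] with ρ hρ
    have : 0 < ρ := ha.trans hρ
    positivity

/-- Integral in the ratio `r = ‖y‖ / ‖x‖`: the parts `r < 1` and `r > 1` contribute the terms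
`r ^ (-α)` and `r ^ (-β)` respectively. -/
lemma lintegral_ratio (m : ℕ) {s p α β c κ : ℝ} (hκ : 0 < κ)
    (hc : c * p = (m : ℝ) + 2 + α + β - s * p + κ) :
    ∫⁻ r in Ioi (0 : ℝ), ENNReal.ofReal ((max 1 r⁻¹) ^ (-κ) / κ) *
      (ENNReal.ofReal (|1 - r ^ (-c)| ^ p * r ^ (β + m + 1)) *
        ePhi m ((m : ℝ) + 2 + s * p) r)
      = ENNReal.ofReal (1 / κ) * eConst m s p α β c := by
  rw [← Ioc_union_Ioi_eq_Ioi (zero_le_one (α := ℝ)),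
    lintegral_union measurableSet_Ioi (Ioc_disjoint_Ioi le_rfl), ← restrict_Ioo_eq_restrict_Ioc,
    lintegral_Ioi_one_inv, eConst_eq_add, mul_add]
  rw [← lintegral_const_mul' (ENNReal.ofReal (1 / κ)) _ ENNReal.ofReal_ne_top,
    ← lintegral_const_mul' (ENNReal.ofReal (1 / κ)) _ ENNReal.ofReal_ne_top]
  congr 1
  · refine setLIntegral_congr_fun measurableSet_Ioo fun r hr ↦ ?_
    have h0 := hr.1
    rw [max_eq_right (one_lt_inv₀ h0 |>.2 hr.2).le, ← mul_assoc, ← mul_assoc,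
      ← ENNReal.ofReal_mul (by positivity), ← ENNReal.ofReal_mul (by positivity)]
    congr 2
    have e1 : |1 - r ^ (-c)| ^ p = r ^ (-(c * p)) * |1 - r ^ c| ^ p := by
      have : 1 - r ^ (-c) = r ^ (-c) * (r ^ c - 1) := by
        rw [mul_sub, ← Real.rpow_add h0]; simp
      rw [this, abs_mul, abs_of_pos (Real.rpow_pos_of_pos h0 _), abs_sub_comm,
        Real.mul_rpow (by positivity) (abs_nonneg _), ← Real.rpow_mul h0.le, neg_mul]
    have e2 : r ^ κ * (r ^ (-(c * p)) * r ^ (β + m + 1)) = r ^ (s * p - 1) * r ^ (-α) := by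
      rw [← Real.rpow_add h0, ← Real.rpow_add h0, ← Real.rpow_add h0]
      congr 1
      rw [hc]; ring
    rw [e1, Real.inv_rpow h0.le, Real.rpow_neg h0.le κ, inv_inv]
    linear_combination |1 - r ^ c| ^ p / κ * e2
  · refine setLIntegral_congr_fun measurableSet_Ioo fun u hu ↦ ?_
    have h0 := hu.1
    rw [inv_inv, max_eq_left hu.2.le, Real.one_rpow, ePhi_inv _ _ _ h0]
    simp only [← mul_assoc]
    rw [← ENNReal.ofReal_mul (by positivity), ← ENNReal.ofReal_mul (by positivity),
      ← ENNReal.ofReal_mul (by positivity), ← ENNReal.ofReal_mul (by positivity)]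
    congr 2
    have e2 : (u ^ 2)⁻¹ * u⁻¹ ^ (β + m + 1) * u ^ ((m : ℝ) + 2 + s * p)
        = u ^ (s * p - 1) * u ^ (-β) := by
      rw [Real.inv_rpow h0.le, ← Real.rpow_two, ← Real.rpow_neg h0.le, ← Real.rpow_neg h0.le,
        ← Real.rpow_add h0, ← Real.rpow_add h0, ← Real.rpow_add h0]
      congr 1
      ring
    rw [Real.inv_rpow h0.le (-c), Real.rpow_neg h0.le c, inv_inv]
    linear_combination |1 - u ^ c| ^ p / κ * e2

/-- The exterior double integral as a Lebesgue integral of extended nonnegative functions. The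
relation `hc` between the exponents makes the integrand homogeneous, so that after the
substitution `‖y‖ = r ‖x‖` the variable `‖x‖` separates. -/
lemma lintegral_exterior (m : ℕ) {s p α β c κ : ℝ} (hκ : 0 < κ)
    (hc : c * p = (m : ℝ) + 2 + α + β - s * p + κ) :
    ∫⁻ x in {x : EuclideanSpace ℝ (Fin (m + 2)) | 1 ≤ ‖x‖},
      ∫⁻ y in {y : EuclideanSpace ℝ (Fin (m + 2)) | 1 ≤ ‖y‖},
        ENNReal.ofReal (|‖x‖ ^ (-c) - ‖y‖ ^ (-c)| ^ p * ‖x - y‖ ^ (-((m : ℝ) + 2 + s * p))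
          * ‖x‖ ^ α * ‖y‖ ^ β)
      = ENNReal.ofReal (sphereVol (m + 1)) *
          (ENNReal.ofReal (1 / κ) * eConst m s p α β c) := by
  set q : ℝ := (m : ℝ) + 2 + s * p with hq
  set W : ℝ → ℝ≥0∞ := fun r ↦
    ENNReal.ofReal (|1 - r ^ (-c)| ^ p * r ^ (β + m + 1)) * ePhi m q r with hW
  have hWm : Measurable W := by simp only [hW]; fun_prop
  have hSm : MeasurableSet {x : EuclideanSpace ℝ (Fin (m + 2)) | 1 ≤ ‖x‖} :=
    measurableSet_le measurable_const measurable_norm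
  set T : ℝ → ℝ≥0∞ := fun ρ ↦ ∫⁻ r in Ioi (0 : ℝ),
    {z : ℝ × ℝ | 1 ≤ z.1 * z.2}.indicator
      (fun z ↦ ENNReal.ofReal (z.1 ^ (-((m : ℝ) + 2) - κ)) * W z.2) (ρ, r) with hT
  have hTm : Measurable T := by
    refine Measurable.lintegral_prod_right' ?_
    exact Measurable.indicator (by fun_prop)
      (measurableSet_le measurable_const (by fun_prop))
  -- The inner integral, in the variable `r = ‖y‖ / ‖x‖`.
  have hA : ∀ x : EuclideanSpace ℝ (Fin (m + 2)), 1 ≤ ‖x‖ →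
      ∫⁻ y in {y : EuclideanSpace ℝ (Fin (m + 2)) | 1 ≤ ‖y‖},
        ENNReal.ofReal (|‖x‖ ^ (-c) - ‖y‖ ^ (-c)| ^ p * ‖x - y‖ ^ (-q) * ‖x‖ ^ α * ‖y‖ ^ β)
      = T ‖x‖ := by
    intro x hx
    have hρ : 0 < ‖x‖ := by linarith
    have hx0 : x ≠ 0 := norm_pos_iff.1 hρ
    set h : ℝ → ℝ≥0∞ := (Ici (1 : ℝ)).indicator fun τ ↦
      ENNReal.ofReal (|‖x‖ ^ (-c) - τ ^ (-c)| ^ p * ‖x‖ ^ α * τ ^ β) with hh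
    have hhm : Measurable h := Measurable.indicator (by fun_prop) measurableSet_Ici
    have e1 : ∫⁻ y in {y : EuclideanSpace ℝ (Fin (m + 2)) | 1 ≤ ‖y‖},
        ENNReal.ofReal (|‖x‖ ^ (-c) - ‖y‖ ^ (-c)| ^ p * ‖x - y‖ ^ (-q) * ‖x‖ ^ α * ‖y‖ ^ β)
        = ∫⁻ y, h ‖y‖ * ENNReal.ofReal (‖x - y‖ ^ (-q)) := by
      rw [← lintegral_indicator hSm]
      refine lintegral_congr fun y ↦ ?_
      by_cases hy : 1 ≤ ‖y‖
      · rw [indicator_of_mem (show y ∈ {y : EuclideanSpace ℝ (Fin (m + 2)) | 1 ≤ ‖y‖} from hy),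
          hh, indicator_of_mem (show ‖y‖ ∈ Ici (1 : ℝ) from hy),
          ← ENNReal.ofReal_mul (by positivity)]
        congr 1
        ring
      · rw [indicator_of_notMem (show y ∉ {y : EuclideanSpace ℝ (Fin (m + 2)) | 1 ≤ ‖y‖} from hy),
          hh, indicator_of_notMem (show ‖y‖ ∉ Ici (1 : ℝ) from hy), zero_mul]
    rw [e1, lintegral_radial_kernel m q h hhm x hx0]
    refine setLIntegral_congr_fun measurableSet_Ioi fun r (hr : 0 < r) ↦ ?_
    by_cases h1 : 1 ≤ ‖x‖ * r
    · rw [hh, indicator_of_mem (show ‖x‖ * r ∈ Ici (1 : ℝ) from h1),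
        indicator_of_mem (show (‖x‖, r) ∈ {z : ℝ × ℝ | 1 ≤ z.1 * z.2} from h1)]
      simp only [hW]
      rw [← mul_assoc, ← ENNReal.ofReal_mul (by positivity), ← ENNReal.ofReal_mul (by positivity)]
      congr 2
      have t1 : |‖x‖ ^ (-c) - (‖x‖ * r) ^ (-c)| ^ p
          = ‖x‖ ^ (-(c * p)) * |1 - r ^ (-c)| ^ p := by
        rw [Real.mul_rpow hρ.le hr.le, ← mul_one_sub, abs_mul,
          abs_of_pos (Real.rpow_pos_of_pos hρ _), Real.mul_rpow (by positivity) (abs_nonneg _),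
          ← Real.rpow_mul hρ.le, neg_mul]
      have t2 : ‖x‖ ^ ((m : ℝ) + 2 - q) * ‖x‖ ^ (-(c * p)) * ‖x‖ ^ α * ‖x‖ ^ β
          = ‖x‖ ^ (-((m : ℝ) + 2) - κ) := by
        rw [← Real.rpow_add hρ, ← Real.rpow_add hρ, ← Real.rpow_add hρ]
        congr 1
        rw [hc, hq]; ring
      have t3 : r ^ (β + m + 1) = r ^ (m + 1) * r ^ β := by
        rw [← Real.rpow_natCast, ← Real.rpow_add hr]
        congr 1; push_cast; ring
      rw [t1, ← t2, t3, Real.mul_rpow hρ.le hr.le]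
      ring
    · rw [hh, indicator_of_notMem (show ‖x‖ * r ∉ Ici (1 : ℝ) from h1),
        indicator_of_notMem (show (‖x‖, r) ∉ {z : ℝ × ℝ | 1 ≤ z.1 * z.2} from h1), mul_zero,
        zero_mul]
  have hB : ∫⁻ x in {x : EuclideanSpace ℝ (Fin (m + 2)) | 1 ≤ ‖x‖}, T ‖x‖
      = ∫⁻ x : EuclideanSpace ℝ (Fin (m + 2)), (Ici (1 : ℝ)).indicator T ‖x‖ := by
    rw [← lintegral_indicator hSm]
    rfl
  rw [setLIntegral_congr_fun hSm fun x hx ↦ hA x hx, hB,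
    lintegral_radial (m + 1) _ (hTm.indicator measurableSet_Ici), ← lintegral_ratio m hκ hc]
  congr 1
  set V : ℝ → ℝ → ℝ≥0∞ := fun ρ r ↦
    {z : ℝ × ℝ | 1 ≤ z.1 ∧ 1 ≤ z.1 * z.2}.indicator
      (fun z ↦ ENNReal.ofReal (z.1 ^ (-1 - κ)) * W z.2) (ρ, r) with hV
  have hVm : Measurable (Function.uncurry V) := by
    refine Measurable.indicator (f := fun z : ℝ × ℝ ↦ ENNReal.ofReal (z.1 ^ (-1 - κ)) * W z.2)
      (by fun_prop) ?_
    exact (measurableSet_le measurable_const measurable_fst).inter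
      (measurableSet_le measurable_const (measurable_fst.mul measurable_snd))
  have hC : ∫⁻ ρ in Ioi (0 : ℝ), ENNReal.ofReal (ρ ^ (m + 1)) * (Ici (1 : ℝ)).indicator T ρ
      = ∫⁻ ρ in Ioi (0 : ℝ), ∫⁻ r in Ioi (0 : ℝ), V ρ r := by
    refine setLIntegral_congr_fun measurableSet_Ioi fun ρ (hρ : 0 < ρ) ↦ ?_
    by_cases h1 : 1 ≤ ρ
    · rw [indicator_of_mem (show ρ ∈ Ici (1 : ℝ) from h1), hT,
        ← lintegral_const_mul' _ _ ENNReal.ofReal_ne_top]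
      refine lintegral_congr fun r ↦ ?_
      by_cases h2 : 1 ≤ ρ * r
      · simp only [hV]
        rw [indicator_of_mem (show (ρ, r) ∈ {z : ℝ × ℝ | 1 ≤ z.1 * z.2} from h2),
          indicator_of_mem (show (ρ, r) ∈ {z : ℝ × ℝ | 1 ≤ z.1 ∧ 1 ≤ z.1 * z.2} from ⟨h1, h2⟩),
          ← mul_assoc, ← ENNReal.ofReal_mul (by positivity)]
        congr 2
        rw [← Real.rpow_natCast, ← Real.rpow_add hρ]
        congr 1; push_cast; ring
      · simp only [hV]
        rw [indicator_of_notMem (show (ρ, r) ∉ {z : ℝ × ℝ | 1 ≤ z.1 * z.2} from h2),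
          indicator_of_notMem (fun h : (ρ, r) ∈ {z : ℝ × ℝ | 1 ≤ z.1 ∧ 1 ≤ z.1 * z.2} ↦ h2 h.2),
          mul_zero]
    · rw [indicator_of_notMem (show ρ ∉ Ici (1 : ℝ) from h1), mul_zero]
      symm
      rw [lintegral_eq_zero_iff (hVm.of_uncurry_left)]
      refine .of_forall fun r ↦ ?_
      exact indicator_of_notMem
        (fun h : (ρ, r) ∈ {z : ℝ × ℝ | 1 ≤ z.1 ∧ 1 ≤ z.1 * z.2} ↦ h1 h.1) _
  rw [hC, lintegral_lintegral_swap hVm.aemeasurable]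
  refine setLIntegral_congr_fun measurableSet_Ioi fun r (hr : 0 < r) ↦ ?_
  have hmax : 0 < max 1 r⁻¹ := lt_max_of_lt_left one_pos
  rw [← lintegral_Ici_rpow hκ hmax, ← lintegral_mul_const _
      (show Measurable fun ρ : ℝ ↦ ENNReal.ofReal (ρ ^ (-1 - κ)) by fun_prop),
    ← lintegral_indicator measurableSet_Ioi, ← lintegral_indicator measurableSet_Ici]
  refine lintegral_congr fun ρ ↦ ?_
  have hiff : (1 ≤ ρ ∧ 1 ≤ ρ * r) ↔ ρ ∈ Ici (max 1 r⁻¹) := by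
    rw [mem_Ici, max_le_iff, inv_le_iff_one_le_mul₀ hr]
  by_cases h : 1 ≤ ρ ∧ 1 ≤ ρ * r
  · rw [indicator_of_mem (show ρ ∈ Ioi (0 : ℝ) from zero_lt_one.trans_le h.1),
      indicator_of_mem (hiff.1 h)]
    exact indicator_of_mem (show (ρ, r) ∈ {z : ℝ × ℝ | 1 ≤ z.1 ∧ 1 ≤ z.1 * z.2} from h) _
  · rw [indicator_of_notMem (fun h' ↦ h (hiff.2 h'))]
    by_cases h0 : ρ ∈ Ioi (0 : ℝ)
    · rw [indicator_of_mem h0]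
      exact indicator_of_notMem (show (ρ, r) ∉ {z : ℝ × ℝ | 1 ≤ z.1 ∧ 1 ≤ z.1 * z.2} from h) _
    · rw [indicator_of_notMem h0]

/-! ### Bochner integrals and strict monotonicity -/

/-- No integrability is needed here: an infinite profile is sent to `0` on both sides. -/
lemma Phi_eq_toReal (m : ℕ) (s p r : ℝ) :
    Phi (m + 2) s p r = (ePhi m ((m : ℝ) + 2 + s * p) r).toReal := by
  have hd : ((m + 2 : ℕ) : ℝ) = (m : ℝ) + 2 := by push_cast; ring
  rw [Phi, if_neg (by omega), ePhi, ENNReal.toReal_mul, ENNReal.toReal_ofReal (sphereVol_pos m).le,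
    Nat.add_sub_cancel, hd, integral_Icc_eq_integral_Ioo]
  congr 1
  rw [integral_eq_lintegral_of_nonneg_ae]
  · congr 1
    refine setLIntegral_congr_fun measurableSet_Ioo fun t ht ↦ ?_
    have h1 : 0 ≤ 1 - t ^ 2 := by nlinarith [ht.1, ht.2]
    rw [← ENNReal.ofReal_mul (by positivity), show ((m : ℝ) + 2 - 3) / 2 = ((m : ℝ) - 1) / 2 by ring]
  · filter_upwards [ae_restrict_mem measurableSet_Ioo] with t ht
    have h1 : 0 ≤ 1 - t ^ 2 := by nlinarith [ht.1, ht.2]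
    have h0 : 0 ≤ 1 - 2 * t * r + r ^ 2 := by nlinarith [sq_nonneg (r - t)]
    exact mul_nonneg (Real.rpow_nonneg h1 _) (Real.rpow_nonneg h0 _)
  · exact (by fun_prop : Measurable fun t : ℝ ↦ (1 - t ^ 2) ^ (((m : ℝ) + 2 - 3) / 2) *
      (1 - 2 * t * r + r ^ 2) ^ (-(((m : ℝ) + 2 + s * p) / 2))).aestronglyMeasurable

lemma ePhi_ne_zero (m : ℕ) (q r : ℝ) : ePhi m q r ≠ 0 := by
  rw [ePhi, mul_ne_zero_iff]
  refine ⟨by simpa using sphereVol_pos m, fun h ↦ ?_⟩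
  rw [lintegral_eq_zero_iff (by fun_prop)] at h
  have h' : ∀ᵐ t ∂(volume.restrict (Ioo (-1 : ℝ) 1)), False := by
    filter_upwards [h, ae_restrict_mem measurableSet_Ioo] with t ht ht'
    have h1 : 0 < 1 - t ^ 2 := by nlinarith [ht'.1, ht'.2]
    have h0 : 0 < 1 - 2 * t * r + r ^ 2 := by nlinarith [sq_nonneg (r - t)]
    have h2 := Real.rpow_pos_of_pos h1 (((m : ℝ) - 1) / 2)
    have h3 := Real.rpow_pos_of_pos h0 (-(q / 2))
    simp only [Pi.zero_apply, mul_eq_zero, ENNReal.ofReal_eq_zero] at ht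
    rcases ht with ht | ht <;> linarith
  rw [eventually_false_iff_eq_bot, ae_eq_bot, Measure.restrict_eq_zero] at h'
  norm_num [Real.volume_Ioo] at h'

lemma weight_pos {r : ℝ} (hr : 0 < r) (s p α β : ℝ) :
    0 < r ^ (s * p - 1) * (r ^ (-α) + r ^ (-β)) := by positivity

/-- The Bochner integral with weight and profile `Φ`; finiteness of `eConst` makes the extended
integrand finite almost everywhere. -/
lemma integral_weight_Phi (m : ℕ) {s p α β c : ℝ} (hfin : eConst m s p α β c < ∞) :
    ∫ r in Ioo (0 : ℝ) 1, (|1 - r ^ c| ^ p * r ^ (s * p - 1) * (r ^ (-α) + r ^ (-β))) *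
      Phi (m + 2) s p r = (eConst m s p α β c).toReal := by
  have hm : Measurable fun r : ℝ ↦
      ENNReal.ofReal (|1 - r ^ c| ^ p * r ^ (s * p - 1) * (r ^ (-α) + r ^ (-β))) *
      ePhi m ((m : ℝ) + 2 + s * p) r := by fun_prop
  have h := integral_toReal hm.aemeasurable (ae_lt_top hm hfin.ne)
  refine Eq.trans ?_ h
  refine setIntegral_congr_fun measurableSet_Ioo fun r hr ↦ ?_
  have h0 := hr.1
  rw [Phi_eq_toReal, ENNReal.toReal_mul, ENNReal.toReal_ofReal (by positivity)]

lemma C1_eq_toReal (m : ℕ) {s p α β : ℝ}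
    (hfin : eConst m s p α β (((m : ℝ) + 2 + α + β - s * p) / p) < ∞) :
    C1 (m + 2) s p α β = (eConst m s p α β (((m : ℝ) + 2 + α + β - s * p) / p)).toReal := by
  rw [← integral_weight_Phi m hfin, C1]
  congr 1
  ext r
  push_cast
  ring

lemma Ceps_eq_toReal (m : ℕ) {s p α β γ ε : ℝ} (hfin : eConst m s p α β (γ + ε) < ∞) :
    Ceps (m + 2) s p α β γ ε = (eConst m s p α β (γ + ε)).toReal := by
  rw [← integral_weight_Phi m hfin, Ceps, ← integral_const_mul]
  congr 1
  ext r
  rw [Phi, if_neg (by omega), mul_left_comm, ← integral_const_mul, ← integral_const_mul,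
    ← integral_const_mul]
  refine setIntegral_congr_fun measurableSet_Icc fun t _ ↦ ?_
  rw [show 2 * r * t = 2 * t * r by ring]
  ring

/-- Increasing the exponent `c` strictly increases `|1 - r ^ c|` on `(0, 1)`. -/
lemma eConst_strictMono (m : ℕ) {s p α β c c' : ℝ} (hp : 1 ≤ p) (hc : 0 < c) (hcc : c < c')
    (hfin : eConst m s p α β c < ∞) : eConst m s p α β c < eConst m s p α β c' := by
  have hm : ∀ a : ℝ, Measurable fun r : ℝ ↦
      ENNReal.ofReal (|1 - r ^ a| ^ p * r ^ (s * p - 1) * (r ^ (-α) + r ^ (-β))) *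
      ePhi m ((m : ℝ) + 2 + s * p) r := fun a ↦ by fun_prop
  refine lintegral_strict_mono ?_ (hm c').aemeasurable hfin.ne ?_
  · simp
  · filter_upwards [ae_restrict_mem measurableSet_Ioo, ae_lt_top (hm c) hfin.ne] with r hr hlt
    have h0 := hr.1
    have hlt1 : r ^ c' < r ^ c := Real.rpow_lt_rpow_of_exponent_gt h0 hr.2 hcc
    have hc1 : r ^ c < 1 := Real.rpow_lt_one h0.le hr.2 hc
    have habs : |1 - r ^ c| < |1 - r ^ c'| := by
      rw [abs_of_pos (by linarith), abs_of_pos (by linarith)]; linarith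
    have hw := weight_pos h0 s p α β
    have hpos : 0 < |1 - r ^ c| ^ p := Real.rpow_pos_of_pos (abs_pos.2 (by linarith)) _
    have hpow : |1 - r ^ c| ^ p < |1 - r ^ c'| ^ p :=
      Real.rpow_lt_rpow (abs_nonneg _) habs (by linarith)
    have hne : ePhi m ((m : ℝ) + 2 + s * p) r ≠ ∞ := by
      intro h
      rw [h, ENNReal.mul_top] at hlt
      · exact lt_irrefl _ hlt
      · rw [mul_assoc]
        simpa using mul_pos hpos hw
    refine ENNReal.mul_lt_mul_left (ePhi_ne_zero _ _ _) hne ?_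
    rw [mul_assoc, mul_assoc]
    exact (ENNReal.ofReal_lt_ofReal_iff (mul_pos (hpos.trans hpow) hw)).2 (mul_lt_mul_of_pos_right hpow hw)

/-- An iterated Bochner integral of a nonnegative measurable function, when the iterated Lebesgue
integral is finite. -/
lemma integral_integral_eq_toReal {X : Type*} [MeasurableSpace X] {μ : Measure X} [SFinite μ]
    {f : X → X → ℝ} (hf : Measurable (Function.uncurry f)) (h0 : ∀ x y, 0 ≤ f x y)
    (hfin : ∫⁻ x, ∫⁻ y, ENNReal.ofReal (f x y) ∂μ ∂μ ≠ ∞) :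
    ∫ x, ∫ y, f x y ∂μ ∂μ = (∫⁻ x, ∫⁻ y, ENNReal.ofReal (f x y) ∂μ ∂μ).toReal := by
  have hm : Measurable fun x ↦ ∫⁻ y, ENNReal.ofReal (f x y) ∂μ :=
    Measurable.lintegral_prod_right' (f := fun z : X × X ↦ ENNReal.ofReal (Function.uncurry f z))
      (by fun_prop)
  rw [← integral_toReal hm.aemeasurable (ae_lt_top hm hfin)]
  congr 1
  ext x
  exact integral_eq_lintegral_of_nonneg_ae (.of_forall (h0 x))
    hf.of_uncurry_left.aestronglyMeasurable

/-- **Exact computation of the exterior double integral** (from the proof of Theorem 4.3):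
for `γ = (d+α+β-sp)/p > 0` and `ε > 0`,
`∫_{B^c}∫_{B^c} ||x|^{-γ-ε} - |y|^{-γ-ε}|^p |x-y|^{-d-sp} |x|^α |y|^β dy dx
  = (|𝕊^{d-1}|/(pε)) 𝒞_ε`, and moreover `𝒞_ε > 𝒞₁(d,s,p,α,β)`. -/
theorem exterior_double_integral_eq
    (d : ℕ) (s p α β γ ε : ℝ)
    (hd : 2 ≤ d) (hp : 1 ≤ p) (hs : s ∈ Ioo (0 : ℝ) 1)
    (hα : α ∈ Ioo (-(d : ℝ)) (s * p)) (hβ : β ∈ Ioo (-(d : ℝ)) (s * p))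
    (hαβ : α + β ∈ Ioo (-(d : ℝ)) (s * p))
    (hγ : γ = ((d : ℝ) + α + β - s * p) / p) (hγpos : 0 < γ) (hε : 0 < ε) :
    (∫ x in {x : EuclideanSpace ℝ (Fin d) | 1 ≤ ‖x‖},
        ∫ y in {y : EuclideanSpace ℝ (Fin d) | 1 ≤ ‖y‖},
          |‖x‖ ^ (-γ - ε) - ‖y‖ ^ (-γ - ε)| ^ p * ‖x - y‖ ^ (-(d : ℝ) - s * p)
            * ‖x‖ ^ α * ‖y‖ ^ β)
        = sphereVol (d - 1) / (p * ε) * Ceps d s p α β γ ε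
      ∧ C1 d s p α β < Ceps d s p α β γ ε := by
  obtain ⟨m, rfl⟩ : ∃ m, d = m + 2 := ⟨d - 2, by omega⟩
  have hd' : ((m + 2 : ℕ) : ℝ) = (m : ℝ) + 2 := by push_cast; ring
  rw [hd'] at hγ ⊢
  have hp0 : 0 < p := by linarith
  have hc : 0 < γ + ε := by linarith
  have hfin : eConst m s p α β (γ + ε) < ∞ := eConst_lt_top m hp hs hα.2 hβ.2 hc
  have hfin0 : eConst m s p α β γ < ∞ := eConst_lt_top m hp hs hα.2 hβ.2 hγpos
  have hcp : (γ + ε) * p = (m : ℝ) + 2 + α + β - s * p + p * ε := by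
    rw [hγ]; field_simp
  have key := lintegral_exterior m (s := s) (mul_pos hp0 hε) hcp
  constructor
  · rw [Ceps_eq_toReal m hfin, show m + 2 - 1 = m + 1 from rfl]
    have e1 : -γ - ε = -(γ + ε) := by ring
    have e2 : -((m : ℝ) + 2) - s * p = -((m : ℝ) + 2 + s * p) := by ring
    rw [e1, e2, integral_integral_eq_toReal, key]
    · rw [ENNReal.toReal_mul, ENNReal.toReal_mul, ENNReal.toReal_ofReal (sphereVol_pos _).le,
        ENNReal.toReal_ofReal (by positivity)]
      ring
    · simp only [Function.uncurry_def]
      fun_prop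
    · intro x y
      positivity
    · rw [key]
      exact (ENNReal.mul_lt_top ENNReal.ofReal_lt_top
        (ENNReal.mul_lt_top ENNReal.ofReal_lt_top hfin)).ne
  · rw [Ceps_eq_toReal m hfin, C1_eq_toReal m (by rwa [← hγ]), ← hγ]
    exact (ENNReal.toReal_lt_toReal hfin0.ne hfin.ne).2
      (eConst_strictMono m hp hγpos (by linarith) hfin0)
end
end

section
/- Let d ≥ 2, p ≥ 1, s ∈ (0,1), and assume α, β ∈ ℝ satisfy α, β ∈ (−d, sp). Set γ := (d+α+β−sp)/p and assume γ > 0. Then the cross-term integral I := ∫_{B} ∫_{B^c} ||x|^{γ} − |y|^{−γ}|^p |x−y|^{−d−sp} |x|^α |y|^β dy dx is finite. -/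
/-!
The integrand is singular at `x = 0`, at `|y| = ∞`, and where `x` and `y` meet on the unit sphere.
Since `|x| < 1 ≤ |y|`, comparing `|x|` with `|y| / 2` separates the third singularity from the
other two.

* If `|x| ≤ |y| / 2`, then `|x - y| ≥ |y| / 2`, and the factor `||x|^γ - |y|^{-γ}|` is at most `1`;
  the integrand is at most a constant times `|x|^α |y|^{β-d-sp}`. This is a product of integrable
  functions, because `α > -d` and `β < sp`.
* If `|x| > |y| / 2`, then `1/2 < |x| < 1 ≤ |y| < 2`, so the weights are bounded. Both powers equal
  `1` on the unit sphere, which gives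
  `||x|^γ - |y|^{-γ}| ≤ 2γ (|y| - |x|) ≤ 2γ |x - y|` (`abs_rpow_sub_rpow_neg_le`), and the integrand
  is at most a constant times `|x - y|^{p-d-sp}`. Its exponent exceeds `-d` because `s < 1`, so it
  is integrable near the diagonal.
-/

open MeasureTheory Real Set Filter Topology

noncomputable section

lemma lintegral_ball_rpow_norm_lt_top {d : ℕ} (hd : 2 ≤ d) {a : ℝ} (ha : -(d : ℝ) < a) (R : ℝ) :
    ∫⁻ x in Metric.ball (0 : EuclideanSpace ℝ (Fin d)) R, ENNReal.ofReal (‖x‖ ^ a) < ⊤ := by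
  have hdim : 1 ≤ Module.finrank ℝ (EuclideanSpace ℝ (Fin d)) := by
    rw [finrank_euclideanSpace_fin]; omega
  have hint : IntegrableOn (fun x : EuclideanSpace ℝ (Fin d) => ‖x‖ ^ a)
      (Metric.ball (0 : EuclideanSpace ℝ (Fin d)) R) := by
    refine integrableOn_ball_of_norm_le_rpow hdim (C := 1) (α := -a) ?_ ?_ ?_
    · rw [finrank_euclideanSpace_fin]; linarith
    · refine Eventually.of_forall fun x => ?_
      rw [neg_neg, one_mul, Real.norm_of_nonneg (by positivity)]
    · exact Measurable.aestronglyMeasurable (by fun_prop)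
  exact hint.lintegral_lt_top

/-- Both powers equal `1` at the unit sphere, so their difference is controlled linearly by the
distances of `r` and `t` to `1`, which add up to `t - r`. -/
lemma abs_rpow_sub_rpow_neg_le {r t γ : ℝ} (hγ : 0 < γ) (hr : 1 / 2 < r) (hr1 : r < 1)
    (ht : 1 ≤ t) : |r ^ γ - t ^ (-γ)| ≤ 2 * γ * (t - r) := by
  have hr0 : 0 < r := by linarith
  have ht0 : 0 < t := by linarith
  have h1 : r ^ γ ≤ 1 := Real.rpow_le_one hr0.le hr1.le hγ.le
  have h2 : t ^ (-γ) ≤ 1 := Real.rpow_le_one_of_one_le_of_nonpos ht (by linarith)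
  -- `u ^ δ = exp (δ log u) ≥ 1 + δ log u`
  have h3 : Real.log r * γ + 1 ≤ r ^ γ := by
    rw [Real.rpow_def_of_pos hr0]; exact Real.add_one_le_exp _
  have h4 : Real.log t * (-γ) + 1 ≤ t ^ (-γ) := by
    rw [Real.rpow_def_of_pos ht0]; exact Real.add_one_le_exp _
  have h5 : Real.log t ≤ t - 1 := Real.log_le_sub_one_of_pos ht0
  have h6 : -Real.log r ≤ 2 * (1 - r) := by
    have h := Real.one_sub_inv_le_log_of_pos hr0
    have h' : r⁻¹ - 1 ≤ 2 * (1 - r) := by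
      rw [inv_eq_one_div, div_sub_one hr0.ne', div_le_iff₀ hr0]
      nlinarith
    linarith
  have h7 : 1 - r ^ γ ≤ 2 * γ * (1 - r) := by nlinarith
  have h8 : 1 - t ^ (-γ) ≤ 2 * γ * (t - 1) := by nlinarith
  rw [abs_le]
  constructor <;> nlinarith

lemma abs_rpow_sub_rpow_neg_le_one {r t γ : ℝ} (hγ : 0 < γ) (hr : 0 ≤ r) (hr1 : r < 1)
    (ht : 1 ≤ t) : |r ^ γ - t ^ (-γ)| ≤ 1 := by
  have h1 : r ^ γ ≤ 1 := Real.rpow_le_one hr hr1.le hγ.le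
  have h2 : t ^ (-γ) ≤ 1 := Real.rpow_le_one_of_one_le_of_nonpos ht (by linarith)
  have h3 : 0 ≤ r ^ γ := by positivity
  have h4 : 0 ≤ t ^ (-γ) := Real.rpow_nonneg (by linarith) _
  rw [abs_le]
  constructor <;> linarith

lemma rpow_le_two_rpow_abs {u a : ℝ} (hu : 1 / 2 ≤ u) (hu2 : u ≤ 2) : u ^ a ≤ 2 ^ |a| := by
  have hu0 : 0 < u := by linarith
  rcases le_total 0 a with ha | ha
  · rw [abs_of_nonneg ha]
    exact Real.rpow_le_rpow hu0.le hu2 ha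
  · rw [abs_of_nonpos ha]
    calc u ^ a ≤ (1 / 2 : ℝ) ^ a := Real.rpow_le_rpow_of_nonpos (by norm_num) hu ha
      _ = 2 ^ (-a) := by rw [one_div, Real.inv_rpow (by norm_num), Real.rpow_neg (by norm_num)]

/-- The integrand where `x` is much smaller than `y`. The factor in `y` is written as a power of
`1 + ‖y‖`, whose integral over the whole space is finite. -/
lemma integrand_le_far {d : ℕ} {s p α β γ : ℝ} (hp : 1 ≤ p) (hs : 0 < s) (hβ : β < s * p)
    (hγ : 0 < γ) {x y : EuclideanSpace ℝ (Fin d)} (hx : ‖x‖ < 1) (hy : 1 ≤ ‖y‖)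
    (hxy : ‖x‖ ≤ ‖y‖ / 2) :
    |‖x‖ ^ γ - ‖y‖ ^ (-γ)| ^ p * ‖x - y‖ ^ (-(d : ℝ) - s * p) * ‖x‖ ^ α * ‖y‖ ^ β ≤
      ‖x‖ ^ α * (2 ^ ((d : ℝ) + s * p) * 2 ^ ((d : ℝ) + s * p - β) *
        (1 + ‖y‖) ^ (-((d : ℝ) + s * p - β))) := by
  have hd0 : (0 : ℝ) ≤ d := d.cast_nonneg
  have hsp : 0 < s * p := by positivity
  have hy0 : 0 < ‖y‖ := by linarith
  have hnum : |‖x‖ ^ γ - ‖y‖ ^ (-γ)| ^ p ≤ 1 :=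
    Real.rpow_le_one (abs_nonneg _)
      (abs_rpow_sub_rpow_neg_le_one hγ (norm_nonneg x) hx hy) (by linarith)
  have hdist : ‖y‖ / 2 ≤ ‖x - y‖ := by
    have := norm_sub_norm_le y x
    rw [norm_sub_rev] at this
    linarith
  have hker : ‖x - y‖ ^ (-(d : ℝ) - s * p) ≤ 2 ^ ((d : ℝ) + s * p) * ‖y‖ ^ (-(d : ℝ) - s * p) := by
    calc ‖x - y‖ ^ (-(d : ℝ) - s * p) ≤ (‖y‖ / 2) ^ (-(d : ℝ) - s * p) :=
          Real.rpow_le_rpow_of_nonpos (by positivity) hdist (by linarith)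
      _ = _ := by
          rw [Real.div_rpow hy0.le (by norm_num), div_eq_mul_inv, ← Real.rpow_neg (by norm_num),
            mul_comm]
          congr 2
          ring
  have hdecay : ‖y‖ ^ (-((d : ℝ) + s * p - β)) ≤
      2 ^ ((d : ℝ) + s * p - β) * (1 + ‖y‖) ^ (-((d : ℝ) + s * p - β)) := by
    calc ‖y‖ ^ (-((d : ℝ) + s * p - β)) ≤ ((1 + ‖y‖) / 2) ^ (-((d : ℝ) + s * p - β)) :=
          Real.rpow_le_rpow_of_nonpos (by positivity) (by linarith) (by linarith)
      _ = _ := by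
          rw [Real.div_rpow (by positivity) (by norm_num), div_eq_mul_inv,
            ← Real.rpow_neg (by norm_num), mul_comm, neg_neg]
  have hmul : ‖y‖ ^ (-(d : ℝ) - s * p) * ‖y‖ ^ β = ‖y‖ ^ (-((d : ℝ) + s * p - β)) := by
    rw [← Real.rpow_add hy0]
    congr 1
    ring
  calc |‖x‖ ^ γ - ‖y‖ ^ (-γ)| ^ p * ‖x - y‖ ^ (-(d : ℝ) - s * p) * ‖x‖ ^ α * ‖y‖ ^ β
      ≤ 1 * (2 ^ ((d : ℝ) + s * p) * ‖y‖ ^ (-(d : ℝ) - s * p)) * ‖x‖ ^ α * ‖y‖ ^ β := by gcongr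
    _ = ‖x‖ ^ α * (2 ^ ((d : ℝ) + s * p) * ‖y‖ ^ (-((d : ℝ) + s * p - β))) := by
        rw [← hmul]; ring
    _ ≤ ‖x‖ ^ α * (2 ^ ((d : ℝ) + s * p) * (2 ^ ((d : ℝ) + s * p - β) *
        (1 + ‖y‖) ^ (-((d : ℝ) + s * p - β)))) := by gcongr
    _ = _ := by ring

/-- The integrand where `x` and `y` are comparable: both then lie near the unit sphere, and the
numerator gains the factor `‖x - y‖ ^ p`. -/
lemma integrand_le_near {d : ℕ} {s p α β γ : ℝ} (hp : 1 ≤ p)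
    (hγ : 0 < γ) {x y : EuclideanSpace ℝ (Fin d)} (hx : ‖x‖ < 1) (hy : 1 ≤ ‖y‖)
    (hxy : ‖y‖ / 2 < ‖x‖) :
    |‖x‖ ^ γ - ‖y‖ ^ (-γ)| ^ p * ‖x - y‖ ^ (-(d : ℝ) - s * p) * ‖x‖ ^ α * ‖y‖ ^ β ≤
      (2 * γ) ^ p * 2 ^ |α| * 2 ^ |β| * ‖x - y‖ ^ (p - d - s * p) := by
  have hdist : ‖y‖ - ‖x‖ ≤ ‖x - y‖ := by
    rw [norm_sub_rev]; exact norm_sub_norm_le y x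
  have hpos : 0 < ‖x - y‖ := by linarith
  have hnum : |‖x‖ ^ γ - ‖y‖ ^ (-γ)| ^ p ≤ (2 * γ) ^ p * ‖x - y‖ ^ p := by
    rw [← Real.mul_rpow (by positivity) hpos.le]
    refine Real.rpow_le_rpow (abs_nonneg _) ?_ (by linarith)
    exact (abs_rpow_sub_rpow_neg_le hγ (by linarith) hx hy).trans (by gcongr)
  have hα : ‖x‖ ^ α ≤ 2 ^ |α| := rpow_le_two_rpow_abs (by linarith) (by linarith)
  have hβ : ‖y‖ ^ β ≤ 2 ^ |β| := rpow_le_two_rpow_abs (by linarith) (by linarith)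
  have hmul : ‖x - y‖ ^ p * ‖x - y‖ ^ (-(d : ℝ) - s * p) = ‖x - y‖ ^ (p - d - s * p) := by
    rw [← Real.rpow_add hpos]
    congr 1
    ring
  calc |‖x‖ ^ γ - ‖y‖ ^ (-γ)| ^ p * ‖x - y‖ ^ (-(d : ℝ) - s * p) * ‖x‖ ^ α * ‖y‖ ^ β
      ≤ ((2 * γ) ^ p * ‖x - y‖ ^ p) * ‖x - y‖ ^ (-(d : ℝ) - s * p) * 2 ^ |α| * 2 ^ |β| := by
        gcongr
    _ = _ := by rw [← hmul]; ring

/-- **Finiteness of the cross-term integral** (from the proof of Theorem 4.3): for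
`γ = (d+α+β-sp)/p > 0`, the integral
`I = ∫_B ∫_{B^c} ||x|^γ - |y|^{-γ}|^p |x-y|^{-d-sp} |x|^α |y|^β dy dx` is finite. -/
theorem cross_term_integral_finite
    (d : ℕ) (s p α β γ : ℝ)
    (hd : 2 ≤ d) (hp : 1 ≤ p) (hs : s ∈ Ioo (0 : ℝ) 1)
    (hα : α ∈ Ioo (-(d : ℝ)) (s * p)) (hβ : β ∈ Ioo (-(d : ℝ)) (s * p))
    (hγ : γ = ((d : ℝ) + α + β - s * p) / p) (hγpos : 0 < γ) :
    ∫⁻ x in Metric.ball (0 : EuclideanSpace ℝ (Fin d)) 1,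
      ∫⁻ y in {y : EuclideanSpace ℝ (Fin d) | 1 ≤ ‖y‖},
        ENNReal.ofReal
          (|‖x‖ ^ γ - ‖y‖ ^ (-γ)| ^ p * ‖x - y‖ ^ (-(d : ℝ) - s * p)
            * ‖x‖ ^ α * ‖y‖ ^ β) < ⊤ := by
  set E := EuclideanSpace ℝ (Fin d)
  set q : ℝ := (d : ℝ) + s * p - β with hq
  set C₁ : ℝ := 2 ^ ((d : ℝ) + s * p) * 2 ^ q with hC₁
  set C₂ : ℝ := (2 * γ) ^ p * 2 ^ |α| * 2 ^ |β| with hC₂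
  have hC₁0 : 0 ≤ C₁ := by positivity
  have hC₂0 : 0 ≤ C₂ := by positivity
  -- In the comparable case `‖x - y‖ < 1 + 2`, whence the radius `3`.
  let k : E → ENNReal :=
    (Metric.ball (0 : E) 3).indicator fun z => ENNReal.ofReal (‖z‖ ^ (p - d - s * p))
  let g : E → ENNReal := fun y => ENNReal.ofReal (C₁ * (1 + ‖y‖) ^ (-q))
  have hkm : Measurable k := Measurable.indicator (by fun_prop) measurableSet_ball
  have hgm : Measurable g := by fun_prop
  have hk : ∫⁻ z, k z < ⊤ := by
    rw [lintegral_indicator measurableSet_ball]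
    exact lintegral_ball_rpow_norm_lt_top hd (by nlinarith [hs.2]) 3
  have hg : ∫⁻ y, g y < ⊤ := by
    simp only [g, ENNReal.ofReal_mul hC₁0]
    rw [lintegral_const_mul _ (by fun_prop)]
    refine ENNReal.mul_lt_top ENNReal.ofReal_lt_top (finite_integral_one_add_norm ?_)
    rw [finrank_euclideanSpace_fin, hq]
    linarith [hβ.2]
  have hbound : ∀ x ∈ Metric.ball (0 : E) 1, ∀ y ∈ {y : E | 1 ≤ ‖y‖},
      ENNReal.ofReal (|‖x‖ ^ γ - ‖y‖ ^ (-γ)| ^ p * ‖x - y‖ ^ (-(d : ℝ) - s * p)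
        * ‖x‖ ^ α * ‖y‖ ^ β) ≤
      ENNReal.ofReal (‖x‖ ^ α) * g y + ENNReal.ofReal C₂ * k (x - y) := by
    intro x hx y hy
    rw [mem_ball_zero_iff] at hx
    have hy1 : 1 ≤ ‖y‖ := hy
    rcases le_or_gt ‖x‖ (‖y‖ / 2) with hxy | hxy
    · refine le_trans ?_ le_self_add
      rw [← ENNReal.ofReal_mul (by positivity)]
      exact ENNReal.ofReal_le_ofReal (integrand_le_far hp hs.1 hβ.2 hγpos hx hy1 hxy)
    · refine le_trans ?_ le_add_self
      have hmem : x - y ∈ Metric.ball (0 : E) 3 := by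
        rw [mem_ball_zero_iff]
        linarith [norm_sub_le x y]
      simp only [k, indicator_of_mem hmem]
      rw [← ENNReal.ofReal_mul hC₂0]
      exact ENNReal.ofReal_le_ofReal (integrand_le_near hp hγpos hx hy1 hxy)
  have hinner : ∀ x ∈ Metric.ball (0 : E) 1,
      ∫⁻ y in {y : E | 1 ≤ ‖y‖}, ENNReal.ofReal (|‖x‖ ^ γ - ‖y‖ ^ (-γ)| ^ p
        * ‖x - y‖ ^ (-(d : ℝ) - s * p) * ‖x‖ ^ α * ‖y‖ ^ β) ≤
      ENNReal.ofReal (‖x‖ ^ α) * (∫⁻ y, g y) + ENNReal.ofReal C₂ * ∫⁻ z, k z := by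
    intro x hx
    have hset : MeasurableSet {y : E | 1 ≤ ‖y‖} := measurableSet_le (by fun_prop) (by fun_prop)
    calc _ ≤ ∫⁻ y in {y : E | 1 ≤ ‖y‖},
          (ENNReal.ofReal (‖x‖ ^ α) * g y + ENNReal.ofReal C₂ * k (x - y)) :=
          setLIntegral_mono' hset (hbound x hx)
      _ ≤ ∫⁻ y, (ENNReal.ofReal (‖x‖ ^ α) * g y + ENNReal.ofReal C₂ * k (x - y)) :=
          setLIntegral_le_lintegral _ _
      _ = _ := by
          rw [lintegral_add_left (by fun_prop), lintegral_const_mul _ hgm,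
            lintegral_const_mul _ (by fun_prop), lintegral_sub_left_eq_self k x]
  refine (setLIntegral_mono' measurableSet_ball hinner).trans_lt ?_
  rw [lintegral_add_right _ measurable_const, lintegral_mul_const _ (by fun_prop),
    setLIntegral_const]
  exact ENNReal.add_lt_top.2
    ⟨ENNReal.mul_lt_top (lintegral_ball_rpow_norm_lt_top hd hα.1 1) hg,
      ENNReal.mul_lt_top (ENNReal.mul_lt_top ENNReal.ofReal_lt_top hk) measure_ball_lt_top⟩
end
end

section
/- Let d ≥ 1, p ≥ 1, s ∈ (0,1), and assume α, β ∈ ℝ satisfy α, β, α+β ∈ (−d, sp). Set α' := sp − d − α and β' := sp − d − β, and assume also α', β', α'+β' ∈ (−d, sp). Then the optimal weighted fractional Hardy constants coincide: 𝒞₁(d,s,p,α,β) = 𝒞₁(d,s,p,α',β'). -/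
/-!
The two integrands agree pointwise on `(0, 1)`. Put `κ = d + α + β - sp`; the substitution sends
`κ` to `-κ`. Factoring out `r ^ (-κ/p)` gives `|1 - r ^ (-κ/p)| ^ p = r ^ (-κ) |1 - r ^ (κ/p)| ^ p`,
and `r ^ (-κ) (r ^ (-α') + r ^ (-β')) = r ^ (-β) + r ^ (-α)`, since `κ + α' = β` and `κ + β' = α`.
The factor `Phi d s p r` is common to both integrands.
-/

open MeasureTheory Real Set Filter Topology

noncomputable section

lemma abs_one_sub_rpow_neg_rpow {r p : ℝ} (hr : 0 < r) (hp : p ≠ 0) (κ : ℝ) :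
    |1 - r ^ (-κ / p)| ^ p = r ^ (-κ) * |1 - r ^ (κ / p)| ^ p := by
  have h : 1 - r ^ (-κ / p) = r ^ (-κ / p) * -(1 - r ^ (κ / p)) := by
    have h1 : r ^ (-κ / p) * r ^ (κ / p) = 1 := by
      rw [← rpow_add hr, neg_div, neg_add_cancel, rpow_zero]
    linear_combination -h1
  rw [h, abs_mul, abs_neg, abs_of_pos (rpow_pos_of_pos hr _),
    mul_rpow (rpow_nonneg hr.le _) (abs_nonneg _), ← rpow_mul hr.le, div_mul_cancel₀ _ hp]

/-- **Invariance of the optimal Hardy constant under the inversion substitution**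
(from the proof of Theorem 4.3): with `α' = sp - d - α` and `β' = sp - d - β`,
`𝒞₁(d,s,p,α,β) = 𝒞₁(d,s,p,α',β')`. -/
theorem C1_inversion_invariance
    (d : ℕ) (s p α β α' β' : ℝ)
    (hd : 1 ≤ d) (hp : 1 ≤ p) (hs : s ∈ Ioo (0 : ℝ) 1)
    (hα : α ∈ Ioo (-(d : ℝ)) (s * p)) (hβ : β ∈ Ioo (-(d : ℝ)) (s * p))
    (hαβ : α + β ∈ Ioo (-(d : ℝ)) (s * p))
    (hα' : α' = s * p - d - α) (hβ' : β' = s * p - d - β)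
    (hα'mem : α' ∈ Ioo (-(d : ℝ)) (s * p)) (hβ'mem : β' ∈ Ioo (-(d : ℝ)) (s * p))
    (hα'β' : α' + β' ∈ Ioo (-(d : ℝ)) (s * p)) :
    C1 d s p α β = C1 d s p α' β' := by
  unfold C1
  refine setIntegral_congr_fun measurableSet_Ioo fun r hr => ?_
  have hr0 : 0 < r := hr.1
  have hκ : (d : ℝ) + α' + β' - s * p = -((d : ℝ) + α + β - s * p) := by
    rw [hα', hβ']; ring
  have hα1 : r ^ (-α') * r ^ (-((d : ℝ) + α + β - s * p)) = r ^ (-β) := by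
    rw [← rpow_add hr0, hα']; congr 1; ring
  have hβ1 : r ^ (-β') * r ^ (-((d : ℝ) + α + β - s * p)) = r ^ (-α) := by
    rw [← rpow_add hr0, hβ']; congr 1; ring
  rw [hκ, abs_one_sub_rpow_neg_rpow hr0 (zero_lt_one.trans_le hp).ne', ← hα1, ← hβ1]
  ring
end
end
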